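/- arXiv:1712.07309 — 5 statements merged into one kernel-verified Lean document; each statement's English description precedes it below -/
import Mathlib

section
/- Set a = √(1/20), b = √(3/20), c = √(1/5), e = √(3/5), f = √(4/5), and weights W₀ = π³/96, W₁ = 5π³/864. Consider the 28 nodes in ℝ⁶: the origin with weight W₀, and the following 27 points (all at radius √(4/5)), each with weight W₁: the two points (−c,±e,0,0,0,0); the eight points whose first two coordinates are (−c,0) and whose last four coordinates are ±1 times a coordinate permutation of (b,b,b,−b); the two points whose first two coordinates are (a,−b) and whose last four coordinates are (b,b,b,b) or (−b,−b,−b,−b); the six points whose first two coordinates are (a,−b) and whose last four coordinates are a coordinate permutation of (b,b,−b,−b); the point (f,0,0,0,0,0); and the eight points whose first two coordinates are (a,b) and which have ±e in exactly one of the last four coordinates and 0 in the others. Then Σ W_i p(x_i) = ∫_{‖x‖≤1} p(x) dx for every real polynomial p in 6 variables of total degree at most 4. -/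
/-!
Both the integral over the ball and the cubature sum are linear in the polynomial, and by
polarization the polynomials of degree at most four in six variables are spanned by the fourth
powers `(c + ⟪v, x⟫)⁴` of affine forms (`functional_eq_zero`). It therefore suffices to compare
the moments of `⟪v, x⟫` of order at most four.

On the node side, the 27 outer nodes have coordinates `a` times `1` or `√3` times small integers,
and direct expansion (`nodes_moment_aux`) shows that they form a spherical 4-design: the sums of
`⟪nᵢ, v⟫ᵏ` are `0`, `(18/5) ‖v‖²`, `0`, `(27/25) ‖v‖⁴` for `k = 1, 2, 3, 4`.

On the ball side, invariance under reflections shows that `∫ ⟪v, x⟫ᵏ` is `‖v‖ᵏ` times a constant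
and vanishes for odd `k`. The constants for `k = 2, 4` come from integrating the node identities,
read with `v = x` running over the ball: this reduces them to the radial integrals `∫ ‖x‖ᵏ`, which
polar coordinates evaluate (`integral_norm_pow`).
-/

open MeasureTheory

/-! ### The nodes and their moments -/

/-- The 27 nodes of radius `√(4/5)`, in terms of the coordinates `a`, `b`, `c`, `e`, `f`. -/
def nodes (a b c e f : ℝ) : Fin 27 → Fin 6 → ℝ :=
  ![![-c, e, 0, 0, 0, 0],
    ![-c, -e, 0, 0, 0, 0],
    ![-c, 0, -b, b, b, b],
    ![-c, 0, b, -b, -b, -b],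
    ![-c, 0, b, -b, b, b],
    ![-c, 0, -b, b, -b, -b],
    ![-c, 0, b, b, -b, b],
    ![-c, 0, -b, -b, b, -b],
    ![-c, 0, b, b, b, -b],
    ![-c, 0, -b, -b, -b, b],
    ![a, -b, b, b, b, b],
    ![a, -b, -b, -b, -b, -b],
    ![a, -b, -b, -b, b, b],
    ![a, -b, -b, b, -b, b],
    ![a, -b, -b, b, b, -b],
    ![a, -b, b, -b, -b, b],
    ![a, -b, b, -b, b, -b],
    ![a, -b, b, b, -b, -b],
    ![f, 0, 0, 0, 0, 0],
    ![a, b, e, 0, 0, 0],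
    ![a, b, -e, 0, 0, 0],
    ![a, b, 0, e, 0, 0],
    ![a, b, 0, -e, 0, 0],
    ![a, b, 0, 0, e, 0],
    ![a, b, 0, 0, -e, 0],
    ![a, b, 0, 0, 0, e],
    ![a, b, 0, 0, 0, -e]]

theorem sum_nodes {M : Type*} [AddCommMonoid M] (a b c e f : ℝ) (g : (Fin 6 → ℝ) → M) :
    ∑ i, g (nodes a b c e f i) =
      g ![-c, e, 0, 0, 0, 0]
          + g ![-c, -e, 0, 0, 0, 0]
          + g ![-c, 0, -b, b, b, b]
          + g ![-c, 0, b, -b, -b, -b]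
          + g ![-c, 0, b, -b, b, b]
          + g ![-c, 0, -b, b, -b, -b]
          + g ![-c, 0, b, b, -b, b]
          + g ![-c, 0, -b, -b, b, -b]
          + g ![-c, 0, b, b, b, -b]
          + g ![-c, 0, -b, -b, -b, b]
          + g ![a, -b, b, b, b, b]
          + g ![a, -b, -b, -b, -b, -b]
          + g ![a, -b, -b, -b, b, b]
          + g ![a, -b, -b, b, -b, b]
          + g ![a, -b, -b, b, b, -b]
          + g ![a, -b, b, -b, -b, b]
          + g ![a, -b, b, -b, b, -b]
          + g ![a, -b, b, b, -b, -b]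
          + g ![f, 0, 0, 0, 0, 0]
          + g ![a, b, e, 0, 0, 0]
          + g ![a, b, -e, 0, 0, 0]
          + g ![a, b, 0, e, 0, 0]
          + g ![a, b, 0, -e, 0, 0]
          + g ![a, b, 0, 0, e, 0]
          + g ![a, b, 0, 0, -e, 0]
          + g ![a, b, 0, 0, 0, e]
          + g ![a, b, 0, 0, 0, -e] := by
  simp only [Fin.sum_univ_castSucc, Finset.univ_eq_empty, Finset.sum_empty, zero_add]
  rfl

/-- The node moments as identities in `a`, `t` and `v`, the node coordinates being `a` times
integers in the first slot and `t * a` times integers in the others. -/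
theorem nodes_moment_aux (a t : ℝ) (v : Fin 6 → ℝ) :
    (∑ i, (∑ k, nodes a (t * a) (2 * a) (2 * t * a) (4 * a) i k * v k) = 0) ∧
    (∑ i, (∑ k, nodes a (t * a) (2 * a) (2 * t * a) (4 * a) i k * v k) ^ 2 =
      24 * a ^ 2 * (3 * v 0 ^ 2 +
        t ^ 2 * (v 1 ^ 2 + v 2 ^ 2 + v 3 ^ 2 + v 4 ^ 2 + v 5 ^ 2))) ∧
    (∑ i, (∑ k, nodes a (t * a) (2 * a) (2 * t * a) (4 * a) i k * v k) ^ 3 =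
      0) ∧
    (∑ i, (∑ k, nodes a (t * a) (2 * a) (2 * t * a) (4 * a) i k * v k) ^ 4 =
      48 * a ^ 4 * (3 * v 0 ^ 2 +
        t ^ 2 * (v 1 ^ 2 + v 2 ^ 2 + v 3 ^ 2 + v 4 ^ 2 + v 5 ^ 2)) ^ 2) := by
  refine ⟨?_, ?_, ?_, ?_⟩
  · rw [sum_nodes a _ _ _ _ (fun x => ∑ k, x k * v k)]
    simp [Fin.sum_univ_succ]
    ring
  · rw [sum_nodes a _ _ _ _ (fun x => (∑ k, x k * v k) ^ 2)]
    simp [Fin.sum_univ_succ]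
    ring
  · rw [sum_nodes a _ _ _ _ (fun x => (∑ k, x k * v k) ^ 3)]
    simp [Fin.sum_univ_succ]
    ring
  · rw [sum_nodes a _ _ _ _ (fun x => (∑ k, x k * v k) ^ 4)]
    simp [Fin.sum_univ_succ]
    ring

/-- `ℝ⁶` with its Euclidean norm. -/
abbrev E6 := EuclideanSpace ℝ (Fin 6)

theorem inner_eq_sum (v x : E6) : inner ℝ v x = ∑ k, v k * x k := by
  simp [PiLp.inner_apply, mul_comm]

/-- The nodes as points of Euclidean space, with `t = √3`. -/
noncomputable def nodeE (a t : ℝ) (i : Fin 27) : E6 :=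
  WithLp.toLp 2 (nodes a (t * a) (2 * a) (2 * t * a) (4 * a) i)

theorem norm_nodeE {a t : ℝ} (ha : a ^ 2 = 1 / 20) (ht : t ^ 2 = 3) (i : Fin 27) :
    ‖nodeE a t i‖ ^ 2 = 4 / 5 := by
  rw [EuclideanSpace.real_norm_sq_eq]
  have h1 : (t * a) ^ 2 = 3 / 20 := by rw [mul_pow, ha, ht]; norm_num
  have h2 : (2 * a) ^ 2 = 1 / 5 := by rw [mul_pow, ha]; norm_num
  have h3 : (2 * t * a) ^ 2 = 3 / 5 := by rw [mul_pow, mul_pow, ha, ht]; norm_num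
  have h4 : (4 * a) ^ 2 = 4 / 5 := by rw [mul_pow, ha]; norm_num
  generalize hb : t * a = b at *
  generalize hc : 2 * a = c at *
  generalize he : 2 * t * a = e at *
  generalize hf : 4 * a = f at *
  unfold nodeE
  rw [hb, hc, he, hf]
  fin_cases i <;> simp [nodes, Fin.sum_univ_succ, ha, h1, h2, h3, h4] <;> norm_num

theorem nodes_moments {a t : ℝ} (ha : a ^ 2 = 1 / 20) (ht : t ^ 2 = 3) (v : E6) :
    (∑ i, inner ℝ (nodeE a t i) v = 0) ∧
    (∑ i, inner ℝ (nodeE a t i) v ^ 2 = 18 / 5 * ‖v‖ ^ 2) ∧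
    (∑ i, inner ℝ (nodeE a t i) v ^ 3 = 0) ∧
    (∑ i, inner ℝ (nodeE a t i) v ^ 4 = 27 / 25 * ‖v‖ ^ 4) := by
  obtain ⟨h1, h2, h3, h4⟩ := nodes_moment_aux a t v
  have hv : ‖v‖ ^ 2 = v 0 ^ 2 + (v 1 ^ 2 + v 2 ^ 2 + v 3 ^ 2 + v 4 ^ 2 + v 5 ^ 2) := by
    rw [EuclideanSpace.real_norm_sq_eq, Fin.sum_univ_six]
    ring
  simp only [inner_eq_sum]
  refine ⟨h1, h2.trans ?_, h3, h4.trans ?_⟩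
  · rw [ha, ht, hv]
    ring
  · rw [show a ^ 4 = (a ^ 2) ^ 2 by ring, show ‖v‖ ^ 4 = (‖v‖ ^ 2) ^ 2 by ring, ha, ht, hv]
    ring

/-! ### Moments of the ball -/

theorem integrableOn_unitBall {g : E6 → ℝ} (hg : Continuous g) :
    IntegrableOn g (Metric.closedBall 0 1) :=
  hg.continuousOn.integrableOn_compact (isCompact_closedBall 0 1)

/-- Two vectors of equal length are exchanged by a reflection, which preserves the ball. -/
theorem integral_inner_pow_congr {v w : E6} (h : ‖v‖ = ‖w‖) (k : ℕ) :
    ∫ x in Metric.closedBall (0 : E6) 1, inner ℝ v x ^ k =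
      ∫ x in Metric.closedBall (0 : E6) 1, inner ℝ w x ^ k := by
  set R : E6 ≃ₗᵢ[ℝ] E6 := Submodule.reflection (ℝ ∙ (v - w))ᗮ with hR
  have hRv : R v = w := Submodule.reflection_sub h
  have hpre : R ⁻¹' Metric.closedBall (0 : E6) 1 = Metric.closedBall 0 1 := by
    ext x
    simp
  have := R.measurePreserving.setIntegral_preimage_emb
    R.toHomeomorph.measurableEmbedding (fun x => inner ℝ w x ^ k) (Metric.closedBall (0 : E6) 1)
  rw [← this, hpre, ← hRv]
  simp only [LinearIsometryEquiv.inner_map_map]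

theorem integral_inner_pow_odd (v : E6) {k : ℕ} (hk : Odd k) :
    ∫ x in Metric.closedBall (0 : E6) 1, inner ℝ v x ^ k = 0 := by
  have h := integral_inner_pow_congr (norm_neg v) k
  simp only [inner_neg_left, hk.neg_pow, integral_neg] at h
  linarith

theorem integral_inner_pow (v : E6) (k : ℕ) :
    ∫ x in Metric.closedBall (0 : E6) 1, inner ℝ v x ^ k =
      ‖v‖ ^ k * ∫ x in Metric.closedBall (0 : E6) 1,
        inner ℝ (EuclideanSpace.single 0 1 : E6) x ^ k := by
  rw [integral_inner_pow_congr (w := ‖v‖ • (EuclideanSpace.single 0 1 : E6))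
    (by simp [norm_smul]) k, ← integral_const_mul]
  simp only [real_inner_smul_left, mul_pow]

theorem volume_unitBall : volume.real (Metric.ball (0 : E6) 1) = Real.pi ^ 3 / 6 := by
  rw [Measure.real, InnerProductSpace.volume_ball_of_dim_even (k := 3) (by simp)]
  simp only [ENNReal.ofReal_one, one_pow, one_mul]
  rw [ENNReal.toReal_ofReal (by positivity)]
  norm_num [Nat.factorial]

theorem integral_norm_pow (k : ℕ) :
    ∫ x in Metric.closedBall (0 : E6) 1, ‖x‖ ^ k = Real.pi ^ 3 / (6 + k) := by
  have h := integral_fun_norm_addHaar (volume : Measure E6)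
    ((Set.Iic (1 : ℝ)).indicator fun y => y ^ k)
  have hL : ∫ x : E6, (Set.Iic (1 : ℝ)).indicator (fun y => y ^ k) ‖x‖ =
      ∫ x in Metric.closedBall (0 : E6) 1, ‖x‖ ^ k := by
    rw [← integral_indicator Metric.isClosed_closedBall.measurableSet]
    congr 1
    ext x
    by_cases hx : ‖x‖ ≤ 1
    · rw [Set.indicator_of_mem (Set.mem_Iic.mpr hx),
        Set.indicator_of_mem (mem_closedBall_zero_iff.mpr hx)]
    · rw [Set.indicator_of_notMem (by simpa using hx),
        Set.indicator_of_notMem (by simpa using hx)]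
  have hI : ∫ y in Set.Ioi (0 : ℝ), y ^ (Module.finrank ℝ E6 - 1) •
      (Set.Iic (1 : ℝ)).indicator (fun y => y ^ k) y = 1 / (6 + k) := by
    have : ∀ y : ℝ, y ^ (Module.finrank ℝ E6 - 1) •
        (Set.Iic (1 : ℝ)).indicator (fun y => y ^ k) y =
        (Set.Iic (1 : ℝ)).indicator (fun y => y ^ (5 + k)) y := by
      intro y
      by_cases hy : y ≤ 1 <;> simp [hy, pow_add]
    simp only [this]
    rw [setIntegral_indicator measurableSet_Iic, Set.Ioi_inter_Iic,
      ← intervalIntegral.integral_of_le zero_le_one, integral_pow]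
    simp
    ring
  rw [← hL, h, hI, volume_unitBall]
  simp
  field_simp

theorem integral_inner_pow_two (v : E6) :
    ∫ x in Metric.closedBall (0 : E6) 1, inner ℝ v x ^ 2 = ‖v‖ ^ 2 * (Real.pi ^ 3 / 48) := by
  rw [integral_inner_pow]
  congr 1
  have ha : (Real.sqrt (1 / 20)) ^ 2 = 1 / 20 := Real.sq_sqrt (by norm_num)
  have ht : (Real.sqrt 3) ^ 2 = 3 := Real.sq_sqrt (by norm_num)
  -- Integrate the node identity `∑ ⟪nᵢ, x⟫² = (18/5) ‖x‖²` over the ball.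
  have h : ∫ x in Metric.closedBall (0 : E6) 1,
      ∑ i, inner ℝ (nodeE (Real.sqrt (1 / 20)) (Real.sqrt 3) i) x ^ 2 =
      ∫ x in Metric.closedBall (0 : E6) 1, 18 / 5 * ‖x‖ ^ 2 := by
    simp only [(nodes_moments ha ht _).2.1]
  rw [integral_finsetSum _ fun i _ => integrableOn_unitBall (by fun_prop),
    integral_const_mul, integral_norm_pow] at h
  simp only [fun i => integral_inner_pow (nodeE (Real.sqrt (1 / 20)) (Real.sqrt 3) i) 2,
    norm_nodeE ha ht] at h
  simp at h
  linarith

theorem integral_inner_pow_four (v : E6) :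
    ∫ x in Metric.closedBall (0 : E6) 1, inner ℝ v x ^ 4 = ‖v‖ ^ 4 * (Real.pi ^ 3 / 160) := by
  rw [integral_inner_pow]
  congr 1
  have ha : (Real.sqrt (1 / 20)) ^ 2 = 1 / 20 := Real.sq_sqrt (by norm_num)
  have ht : (Real.sqrt 3) ^ 2 = 3 := Real.sq_sqrt (by norm_num)
  have hn (i : Fin 27) : ‖nodeE (Real.sqrt (1 / 20)) (Real.sqrt 3) i‖ ^ 4 = 16 / 25 := by
    rw [show 4 = 2 * 2 from rfl, pow_mul, norm_nodeE ha ht]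
    norm_num
  -- Integrate the node identity `∑ ⟪nᵢ, x⟫⁴ = (27/25) ‖x‖⁴` over the ball.
  have h : ∫ x in Metric.closedBall (0 : E6) 1,
      ∑ i, inner ℝ (nodeE (Real.sqrt (1 / 20)) (Real.sqrt 3) i) x ^ 4 =
      ∫ x in Metric.closedBall (0 : E6) 1, 27 / 25 * ‖x‖ ^ 4 := by
    simp only [(nodes_moments ha ht _).2.2.2]
  rw [integral_finsetSum _ fun i _ => integrableOn_unitBall (by fun_prop),
    integral_const_mul, integral_norm_pow] at h
  simp only [fun i => integral_inner_pow (nodeE (Real.sqrt (1 / 20)) (Real.sqrt 3) i) 4,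
    hn] at h
  simp at h
  linarith

theorem integral_affine_pow_four (c : ℝ) (v : E6) :
    ∫ x in Metric.closedBall (0 : E6) 1, (c + inner ℝ v x) ^ 4 =
      c ^ 4 * (Real.pi ^ 3 / 6) + 6 * c ^ 2 * (‖v‖ ^ 2 * (Real.pi ^ 3 / 48)) +
        ‖v‖ ^ 4 * (Real.pi ^ 3 / 160) := by
  have hexp (x : E6) : (c + inner ℝ v x) ^ 4 = c ^ 4 * ‖x‖ ^ 0 + 4 * c ^ 3 * inner ℝ v x ^ 1 +
      6 * c ^ 2 * inner ℝ v x ^ 2 + 4 * c * inner ℝ v x ^ 3 + inner ℝ v x ^ 4 := by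
    ring
  simp only [hexp]
  rw [integral_add (integrableOn_unitBall (by fun_prop)) (integrableOn_unitBall (by fun_prop)),
    integral_add (integrableOn_unitBall (by fun_prop)) (integrableOn_unitBall (by fun_prop)),
    integral_add (integrableOn_unitBall (by fun_prop)) (integrableOn_unitBall (by fun_prop)),
    integral_add (integrableOn_unitBall (by fun_prop)) (integrableOn_unitBall (by fun_prop))]
  simp only [integral_const_mul]
  rw [integral_norm_pow, integral_inner_pow_odd v (by decide : Odd 1), integral_inner_pow_two,
    integral_inner_pow_odd v (by decide : Odd 3), integral_inner_pow_four]
  norm_num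

/-! ### Reduction of polynomials to fourth powers of affine forms -/

/-- The affine form `c + ∑ vₖ Xₖ` as a polynomial. -/
noncomputable def affinePoly (c : ℝ) (v : Fin 6 → ℝ) : MvPolynomial (Fin 6) ℝ :=
  MvPolynomial.C c + ∑ k, MvPolynomial.C (v k) * MvPolynomial.X k

theorem affinePoly_add (c d : ℝ) (v w : Fin 6 → ℝ) :
    affinePoly c v + affinePoly d w = affinePoly (c + d) (v + w) := by
  simp only [affinePoly, Pi.add_apply, map_add, add_mul, Finset.sum_add_distrib]
  ring

theorem affinePoly_sub (c d : ℝ) (v w : Fin 6 → ℝ) :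
    affinePoly c v - affinePoly d w = affinePoly (c - d) (v - w) := by
  simp only [affinePoly, Pi.sub_apply, map_sub, sub_mul, Finset.sum_sub_distrib]
  ring

theorem eval_affinePoly (c : ℝ) (v x : Fin 6 → ℝ) :
    MvPolynomial.eval x (affinePoly c v) = c + ∑ k, v k * x k := by
  simp [affinePoly]

/-- Peeling one variable (or the factor `1`) off a monomial. -/
theorem exists_affinePoly_mul (n : ℕ) (m : Fin 6 →₀ ℕ) (hm : m.degree ≤ n + 1) :
    ∃ (c : ℝ) (v : Fin 6 → ℝ) (m' : Fin 6 →₀ ℕ), m'.degree ≤ n ∧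
      MvPolynomial.monomial m (1 : ℝ) = affinePoly c v * MvPolynomial.monomial m' 1 := by
  by_cases h0 : m = 0
  · exact ⟨1, 0, 0, by simp, by simp [h0, affinePoly]⟩
  · obtain ⟨i, hi⟩ := Finsupp.ne_iff.mp h0
    have hle : Finsupp.single i 1 ≤ m := by
      rw [Finsupp.single_le_iff]
      exact Nat.one_le_iff_ne_zero.mpr hi
    have hsum : Finsupp.single i 1 + (m - Finsupp.single i 1) = m := add_tsub_cancel_of_le hle
    refine ⟨0, Pi.single i 1, m - Finsupp.single i 1, ?_, ?_⟩
    · have := congrArg Finsupp.degree hsum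
      rw [map_add, Finsupp.degree_single] at this
      omega
    · have hX : affinePoly 0 (Pi.single i 1) = MvPolynomial.X i := by
        rw [affinePoly, Finset.sum_eq_single i] <;> simp +contextual
      rw [hX, MvPolynomial.X, MvPolynomial.monomial_mul, hsum, one_mul]

/-- A linear functional that kills fourth powers of affine forms kills, by polarization, products
of four affine forms, hence every polynomial of degree at most four. -/
theorem functional_eq_zero (L : MvPolynomial (Fin 6) ℝ →ₗ[ℝ] ℝ)
    (hL : ∀ c v, L (affinePoly c v ^ 4) = 0) (q : MvPolynomial (Fin 6) ℝ)
    (hq : q.totalDegree ≤ 4) : L q = 0 := by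
  have hmul (c₁ c₂ c₃ c₄ : ℝ) (v₁ v₂ v₃ v₄ : Fin 6 → ℝ) :
      L (affinePoly c₁ v₁ * affinePoly c₂ v₂ * affinePoly c₃ v₃ * affinePoly c₄ v₄) = 0 := by
    have key (x y z w : MvPolynomial (Fin 6) ℝ) : (192 : ℝ) • (x * y * z * w) =
        (x + y + z + w) ^ 4 - (x + y + z - w) ^ 4 - (x + y - z + w) ^ 4 + (x + y - z - w) ^ 4
        - (x - y + z + w) ^ 4 + (x - y + z - w) ^ 4 + (x - y - z + w) ^ 4
        - (x - y - z - w) ^ 4 := by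
      rw [MvPolynomial.smul_eq_C_mul, show (MvPolynomial.C (192 : ℝ) :
        MvPolynomial (Fin 6) ℝ) = 192 from map_ofNat _ 192]
      ring
    have h := congrArg L (key (affinePoly c₁ v₁) (affinePoly c₂ v₂) (affinePoly c₃ v₃)
      (affinePoly c₄ v₄))
    simp only [affinePoly_add, affinePoly_sub, map_add, map_sub, map_smul, hL] at h
    simpa using h
  rw [q.as_sum, map_sum]
  refine Finset.sum_eq_zero fun m hm => ?_
  have hdeg : m.degree ≤ 4 := (MvPolynomial.le_totalDegree hm).trans hq
  obtain ⟨c₁, v₁, m₁, h₁, e₁⟩ := exists_affinePoly_mul 3 m hdeg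
  obtain ⟨c₂, v₂, m₂, h₂, e₂⟩ := exists_affinePoly_mul 2 m₁ h₁
  obtain ⟨c₃, v₃, m₃, h₃, e₃⟩ := exists_affinePoly_mul 1 m₂ h₂
  obtain ⟨c₄, v₄, m₄, h₄, e₄⟩ := exists_affinePoly_mul 0 m₃ h₃
  have h0 : m₄ = 0 := (Finsupp.degree_eq_zero_iff m₄).mp (Nat.le_zero.mp h₄)
  have : MvPolynomial.monomial m (q.coeff m) = q.coeff m •
      (affinePoly c₁ v₁ * affinePoly c₂ v₂ * affinePoly c₃ v₃ * affinePoly c₄ v₄) := by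
    rw [← mul_one (q.coeff m), ← smul_eq_mul, ← MvPolynomial.smul_monomial, e₁, e₂, e₃, e₄, h0]
    simp [mul_assoc]
  rw [this, map_smul, hmul, smul_zero]

/-! ### The cubature error functional -/

theorem setIntegral_eq_closedBall (g : (Fin 6 → ℝ) → ℝ) :
    ∫ x in {y : Fin 6 → ℝ | ∑ t, y t ^ 2 ≤ 1}, g x =
      ∫ x in Metric.closedBall (0 : E6) 1, g x.ofLp := by
  rw [← (PiLp.volume_preserving_toLp (Fin 6)).setIntegral_preimage_emb
    (MeasurableEquiv.toLp 2 _).measurableEmbedding]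
  congr 2
  ext y
  simp [EuclideanSpace.norm_eq, Real.sqrt_le_one]

theorem continuous_eval_ofLp (p : MvPolynomial (Fin 6) ℝ) :
    Continuous fun x : E6 => MvPolynomial.eval x.ofLp p :=
  (MvPolynomial.continuous_eval p).comp (PiLp.continuous_ofLp 2 _)

/-- Cubature sum minus integral over the ball, as a linear functional of the polynomial. -/
noncomputable def cubatureError (a t W0 W1 : ℝ) : MvPolynomial (Fin 6) ℝ →ₗ[ℝ] ℝ where
  toFun p := W0 * MvPolynomial.eval 0 p +
    W1 * ∑ i, MvPolynomial.eval (nodeE a t i).ofLp p -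
    ∫ x in Metric.closedBall (0 : E6) 1, MvPolynomial.eval x.ofLp p
  map_add' p q := by
    simp only [map_add, Finset.sum_add_distrib]
    rw [integral_add (integrableOn_unitBall (continuous_eval_ofLp p))
      (integrableOn_unitBall (continuous_eval_ofLp q))]
    ring
  map_smul' r p := by
    simp only [MvPolynomial.smul_eval, ← Finset.mul_sum, integral_const_mul, RingHom.id_apply,
      smul_eq_mul]
    ring

theorem cubatureError_affine {a t : ℝ} (ha : a ^ 2 = 1 / 20) (ht : t ^ 2 = 3)
    (c : ℝ) (v : Fin 6 → ℝ) :
    cubatureError a t (Real.pi ^ 3 / 96) (5 * Real.pi ^ 3 / 864) (affinePoly c v ^ 4) = 0 := by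
  have hev (x : E6) : MvPolynomial.eval x.ofLp (affinePoly c v ^ 4) =
      (c + inner ℝ (WithLp.toLp 2 v) x) ^ 4 := by
    rw [map_pow, eval_affinePoly, inner_eq_sum]
  have h0 : MvPolynomial.eval 0 (affinePoly c v ^ 4) = c ^ 4 := by
    rw [map_pow, eval_affinePoly]
    simp
  obtain ⟨h1, h2, h3, h4⟩ := nodes_moments ha ht (WithLp.toLp 2 v)
  have hsum : ∑ i, (c + inner ℝ (WithLp.toLp 2 v) (nodeE a t i)) ^ 4 =
      27 * c ^ 4 + 6 * c ^ 2 * (18 / 5 * ‖(WithLp.toLp 2 v : E6)‖ ^ 2) +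
        27 / 25 * ‖(WithLp.toLp 2 v : E6)‖ ^ 4 := by
    have hexp (i : Fin 27) : (c + inner ℝ (WithLp.toLp 2 v) (nodeE a t i)) ^ 4 =
        c ^ 4 + 4 * c ^ 3 * inner ℝ (nodeE a t i) (WithLp.toLp 2 v) +
        6 * c ^ 2 * inner ℝ (nodeE a t i) (WithLp.toLp 2 v) ^ 2 +
        4 * c * inner ℝ (nodeE a t i) (WithLp.toLp 2 v) ^ 3 +
        inner ℝ (nodeE a t i) (WithLp.toLp 2 v) ^ 4 := by
      rw [real_inner_comm]
      ring
    simp only [hexp, Finset.sum_add_distrib, ← Finset.mul_sum, h1, h2, h3, h4]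
    simp
  simp only [cubatureError, LinearMap.coe_mk, AddHom.coe_mk]
  rw [h0]
  simp only [hev, hsum, integral_affine_pow_four]
  ring

/-- 28 point rule of degree 4 for `S_6`. -/
theorem stmt_14 (a b c e f W0 W1 : ℝ)
    (ha : a = Real.sqrt (1 / 20))
    (hb : b = Real.sqrt (3 / 20))
    (hc : c = Real.sqrt (1 / 5))
    (he : e = Real.sqrt (3 / 5))
    (hf : f = Real.sqrt (4 / 5))
    (hW0 : W0 = Real.pi ^ 3 / 96)
    (hW1 : W1 = 5 * Real.pi ^ 3 / 864)
    :
    ∀ q : MvPolynomial (Fin 6) ℝ, q.totalDegree ≤ 4 →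
      W0 * (MvPolynomial.eval ![0, 0, 0, 0, 0, 0] q)
        + W1 * (MvPolynomial.eval ![-c, e, 0, 0, 0, 0] q
          + MvPolynomial.eval ![-c, -e, 0, 0, 0, 0] q
          + MvPolynomial.eval ![-c, 0, -b, b, b, b] q
          + MvPolynomial.eval ![-c, 0, b, -b, -b, -b] q
          + MvPolynomial.eval ![-c, 0, b, -b, b, b] q
          + MvPolynomial.eval ![-c, 0, -b, b, -b, -b] q
          + MvPolynomial.eval ![-c, 0, b, b, -b, b] q
          + MvPolynomial.eval ![-c, 0, -b, -b, b, -b] q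
          + MvPolynomial.eval ![-c, 0, b, b, b, -b] q
          + MvPolynomial.eval ![-c, 0, -b, -b, -b, b] q
          + MvPolynomial.eval ![a, -b, b, b, b, b] q
          + MvPolynomial.eval ![a, -b, -b, -b, -b, -b] q
          + MvPolynomial.eval ![a, -b, -b, -b, b, b] q
          + MvPolynomial.eval ![a, -b, -b, b, -b, b] q
          + MvPolynomial.eval ![a, -b, -b, b, b, -b] q
          + MvPolynomial.eval ![a, -b, b, -b, -b, b] q
          + MvPolynomial.eval ![a, -b, b, -b, b, -b] q
          + MvPolynomial.eval ![a, -b, b, b, -b, -b] q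
          + MvPolynomial.eval ![f, 0, 0, 0, 0, 0] q
          + MvPolynomial.eval ![a, b, e, 0, 0, 0] q
          + MvPolynomial.eval ![a, b, -e, 0, 0, 0] q
          + MvPolynomial.eval ![a, b, 0, e, 0, 0] q
          + MvPolynomial.eval ![a, b, 0, -e, 0, 0] q
          + MvPolynomial.eval ![a, b, 0, 0, e, 0] q
          + MvPolynomial.eval ![a, b, 0, 0, -e, 0] q
          + MvPolynomial.eval ![a, b, 0, 0, 0, e] q
          + MvPolynomial.eval ![a, b, 0, 0, 0, -e] q)
        = ∫ x in {y : Fin 6 → ℝ | ∑ t, y t ^ 2 ≤ 1}, MvPolynomial.eval x q := by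
  intro q hq
  have ha2 : a ^ 2 = 1 / 20 := by rw [ha]; exact Real.sq_sqrt (by norm_num)
  have ht2 : (Real.sqrt 3) ^ 2 = 3 := Real.sq_sqrt (by norm_num)
  have ha0 : 0 ≤ a := ha ▸ Real.sqrt_nonneg _
  have hb' : b = Real.sqrt 3 * a := by
    rw [hb, Real.sqrt_eq_iff_mul_self_eq (by norm_num) (by positivity)]
    linear_combination -a ^ 2 * ht2 - 3 * ha2
  have hc' : c = 2 * a := by
    rw [hc, Real.sqrt_eq_iff_mul_self_eq (by norm_num) (by positivity)]
    linear_combination -4 * ha2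
  have he' : e = 2 * Real.sqrt 3 * a := by
    rw [he, Real.sqrt_eq_iff_mul_self_eq (by norm_num) (by positivity)]
    linear_combination -4 * a ^ 2 * ht2 - 12 * ha2
  have hf' : f = 4 * a := by
    rw [hf, Real.sqrt_eq_iff_mul_self_eq (by norm_num) (by positivity)]
    linear_combination -16 * ha2
  have h := functional_eq_zero (cubatureError a (Real.sqrt 3) W0 W1)
    (fun r v => by rw [hW0, hW1]; exact cubatureError_affine ha2 ht2 r v) q hq
  have hz : (![0, 0, 0, 0, 0, 0] : Fin 6 → ℝ) = 0 := by
    ext i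
    fin_cases i <;> rfl
  rw [← sum_nodes a b c e f (fun x => MvPolynomial.eval x q), hz, setIntegral_eq_closedBall]
  simp only [cubatureError, nodeE, LinearMap.coe_mk, AddHom.coe_mk, ← hb', ← hc', ← he',
    ← hf'] at h
  linarith
end

section
/- Set a = √(1/3), b = √(2/3), c = 1, e = √(4/3), f = √2, g = √(8/3), h = √3, and weights W₀ = π²/3, W₁ = π²/32, W₂ = π²/48. Consider the 23 nodes in ℝ⁴: the origin with weight W₀; (±h,0,0,0) with weight W₂ (2 points); (0,±h,0,0) with weight W₁ (2 points); the eight points (±c, σb, −σa, ±c) where σ ∈ {+1,−1} and the two ± signs on the first and fourth coordinates vary independently, each with weight W₁; the four points (±c, σb, σe, 0) with σ ∈ {+1,−1}, each with weight W₁; the two points (0, σa, −σg, 0) with σ ∈ {+1,−1}, each with weight W₁; and the four points (0, σa, σb, ±f) with σ ∈ {+1,−1} and independent ± sign, each with weight W₁. Then Σ W_i p(x_i) = ∫_{ℝ⁴} e^{−‖x‖²} p(x) dx for every real polynomial p in 4 variables of total degree at most 5. -/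
open MeasureTheory

/-!
By linearity it suffices to treat monomials `x₀^k₀ x₁^k₁ x₂^k₂ x₃^k₃` with `k₀ + k₁ + k₂ + k₃ ≤ 5`.
By Fubini the Gaussian integral of such a monomial is a product of the one-dimensional moments
`∫ x^k e^{-x²} = √π μₖ`, where `μ₀, …, μ₅ = 1, 0, 1/2, 0, 3/4, 0` (`integral_pow_mul_exp`): odd
moments vanish by symmetry and even ones are values of the Gamma function. On the other side, every
coordinate of a node is a product of `a = √(1/3)`, `√2` and an integer (`b = √2 a`, `e = 2a`,
`g = 2√2 a`, `f = √2`, `h = 3a`), so each of the 126 moment equations reduces, using `a² = 1/3` and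
`√2² = 2`, to an identity of rational numbers (`moment_equations`).
-/

/-- The moments of `e^{-x²}` divided by `√π`;
for even `k ≥ 6`, never needed here, the value is junk. -/
noncomputable def mu : ℕ → ℝ
  | 0 => 1
  | 2 => 1 / 2
  | 4 => 3 / 4
  | _ => 0

lemma integrable_pow_mul_exp (k : ℕ) : Integrable fun x : ℝ => x ^ k * Real.exp (-x ^ 2) := by
  have h := integrable_rpow_mul_exp_neg_mul_sq (b := 1) one_pos (s := k)
    (lt_of_lt_of_le (by norm_num) (Nat.cast_nonneg k))
  simpa using h

lemma integral_odd_pow_mul_exp {k : ℕ} (hk : Odd k) :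
    ∫ x : ℝ, x ^ k * Real.exp (-x ^ 2) = 0 := by
  have h := integral_neg_eq_self (fun x : ℝ => x ^ k * Real.exp (-x ^ 2)) volume
  simp only [hk.neg_pow, neg_sq, neg_mul, integral_neg] at h
  linarith

lemma integral_even_pow_mul_exp {k : ℕ} (hk : Even k) :
    ∫ x : ℝ, x ^ k * Real.exp (-x ^ 2) = Real.Gamma ((k + 1) / 2) := by
  have h := integral_comp_abs (f := fun x : ℝ => x ^ k * Real.exp (-x ^ 2))
  have h2 := integral_rpow_mul_exp_neg_rpow (p := 2) (q := k) two_pos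
    (lt_of_lt_of_le (by norm_num) (Nat.cast_nonneg k))
  simp only [hk.pow_abs, sq_abs] at h
  simp only [Real.rpow_natCast, Real.rpow_two] at h2
  rw [h, h2]
  ring

lemma integral_pow_mul_exp {k : ℕ} (hk : k ≤ 5) :
    ∫ x : ℝ, x ^ k * Real.exp (-x ^ 2) = Real.sqrt Real.pi * mu k := by
  have g1 : Real.Gamma (3 / 2) = 1 / 2 * Real.sqrt Real.pi := by
    rw [show (3 / 2 : ℝ) = 1 / 2 + 1 by norm_num, Real.Gamma_add_one (by norm_num),
      Real.Gamma_one_half_eq]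
  have g2 : Real.Gamma (5 / 2) = 3 / 4 * Real.sqrt Real.pi := by
    rw [show (5 / 2 : ℝ) = 3 / 2 + 1 by norm_num, Real.Gamma_add_one (by norm_num), g1]
    ring
  interval_cases k
  · rw [integral_even_pow_mul_exp (by decide)]
    norm_num [mu, Real.Gamma_one_half_eq, -one_div]
  · rw [integral_odd_pow_mul_exp (by decide)]
    simp [mu]
  · rw [integral_even_pow_mul_exp (by decide)]
    norm_num [mu, g1]
    ring
  · rw [integral_odd_pow_mul_exp (by decide)]
    simp [mu]
  · rw [integral_even_pow_mul_exp (by decide)]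
    norm_num [mu, g2]
    ring
  · rw [integral_odd_pow_mul_exp (by decide)]
    simp [mu]

lemma exp_mul_monomial (d : Fin 4 → ℕ) (x : Fin 4 → ℝ) :
    Real.exp (-(∑ t, x t ^ 2)) * ∏ i, x i ^ d i
      = ∏ i, (x i ^ d i * Real.exp (-x i ^ 2)) := by
  rw [Finset.prod_mul_distrib, ← Real.exp_sum, Finset.sum_neg_distrib, mul_comm]

lemma integrable_monomial (d : Fin 4 → ℕ) :
    Integrable fun x : Fin 4 → ℝ => Real.exp (-(∑ t, x t ^ 2)) * ∏ i, x i ^ d i := by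
  simp only [exp_mul_monomial]
  exact Integrable.fintype_prod (f := fun i (y : ℝ) => y ^ d i * Real.exp (-y ^ 2))
    fun i => integrable_pow_mul_exp (d i)

lemma integral_monomial (d : Fin 4 → ℕ) (hd : ∀ i, d i ≤ 5) :
    ∫ x : Fin 4 → ℝ, Real.exp (-(∑ t, x t ^ 2)) * ∏ i, x i ^ d i
      = Real.pi ^ 2 * (mu (d 0) * mu (d 1) * mu (d 2) * mu (d 3)) := by
  simp only [exp_mul_monomial]
  rw [integral_fintype_prod_volume_eq_prod (fun i (y : ℝ) => y ^ d i * Real.exp (-y ^ 2))]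
  simp only [integral_pow_mul_exp (hd _), Fin.prod_univ_four]
  have h : Real.sqrt Real.pi ^ 2 = Real.pi := Real.sq_sqrt Real.pi_pos.le
  linear_combination (Real.sqrt Real.pi ^ 2 + Real.pi) *
    (mu (d 0) * mu (d 1) * mu (d 2) * mu (d 3)) * h

/-- The moment equations of the rule divided by `π²`, with all node coordinates written in terms of
`a = √(1/3)` and `s = √2`. -/
lemma moment_equations (a s : ℝ) (ha : a ^ 2 = 1 / 3) (hs : s ^ 2 = 2)
    (i j k l : ℕ) (hd : i + j + k + l ≤ 5) :
    1 / 3 * ((0 : ℝ) ^ i * (0 : ℝ) ^ j * (0 : ℝ) ^ k * (0 : ℝ) ^ l)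
      + 1 / 48 * ((3 * a) ^ i * (0 : ℝ) ^ j * (0 : ℝ) ^ k * (0 : ℝ) ^ l
        + (-(3 * a)) ^ i * (0 : ℝ) ^ j * (0 : ℝ) ^ k * (0 : ℝ) ^ l)
      + 1 / 32 * ((0 : ℝ) ^ i * (3 * a) ^ j * (0 : ℝ) ^ k * (0 : ℝ) ^ l
        + (0 : ℝ) ^ i * (-(3 * a)) ^ j * (0 : ℝ) ^ k * (0 : ℝ) ^ l
        + (1 : ℝ) ^ i * (s * a) ^ j * (-a) ^ k * (1 : ℝ) ^ l
        + (1 : ℝ) ^ i * (s * a) ^ j * (-a) ^ k * (-1) ^ l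
        + (1 : ℝ) ^ i * (-(s * a)) ^ j * a ^ k * (1 : ℝ) ^ l
        + (1 : ℝ) ^ i * (-(s * a)) ^ j * a ^ k * (-1) ^ l
        + (-1) ^ i * (s * a) ^ j * (-a) ^ k * (1 : ℝ) ^ l
        + (-1) ^ i * (s * a) ^ j * (-a) ^ k * (-1) ^ l
        + (-1) ^ i * (-(s * a)) ^ j * a ^ k * (1 : ℝ) ^ l
        + (-1) ^ i * (-(s * a)) ^ j * a ^ k * (-1) ^ l
        + (1 : ℝ) ^ i * (s * a) ^ j * (2 * a) ^ k * (0 : ℝ) ^ l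
        + (1 : ℝ) ^ i * (-(s * a)) ^ j * (-(2 * a)) ^ k * (0 : ℝ) ^ l
        + (-1) ^ i * (s * a) ^ j * (2 * a) ^ k * (0 : ℝ) ^ l
        + (-1) ^ i * (-(s * a)) ^ j * (-(2 * a)) ^ k * (0 : ℝ) ^ l
        + (0 : ℝ) ^ i * a ^ j * (-(2 * s * a)) ^ k * (0 : ℝ) ^ l
        + (0 : ℝ) ^ i * (-a) ^ j * (2 * s * a) ^ k * (0 : ℝ) ^ l
        + (0 : ℝ) ^ i * a ^ j * (s * a) ^ k * s ^ l
        + (0 : ℝ) ^ i * a ^ j * (s * a) ^ k * (-s) ^ l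
        + (0 : ℝ) ^ i * (-a) ^ j * (-(s * a)) ^ k * s ^ l
        + (0 : ℝ) ^ i * (-a) ^ j * (-(s * a)) ^ k * (-s) ^ l)
      = mu i * mu j * mu k * mu l := by
  have a4 : a ^ 4 = 1 / 9 := by linear_combination (a ^ 2 + 1 / 3) * ha
  have s3 : s ^ 3 = 2 * s := by linear_combination s * hs
  have s4 : s ^ 4 = 4 := by linear_combination (s ^ 2 + 2) * hs
  have hi : i ≤ 5 := by omega
  interval_cases i
  all_goals
    have hj : j ≤ 5 := by omega
    interval_cases j
  all_goals first
    | omega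
    | have hk : k ≤ 5 := by omega
      interval_cases k
  all_goals first
    | omega
    | have hl : l ≤ 5 := by omega
      interval_cases l
  all_goals first
    | omega
    | (simp only [mu]
       ring_nf
       try simp only [ha, a4, hs, s3, s4]
       try ring_nf)

/-- 23 point rule of degree 5 for `E_4^{r²}`. -/
theorem stmt_15 (a b c e f g h W0 W1 W2 : ℝ)
    (ha : a = Real.sqrt (1 / 3))
    (hb : b = Real.sqrt (2 / 3))
    (hc : c = 1)
    (he : e = Real.sqrt (4 / 3))
    (hf : f = Real.sqrt 2)
    (hg : g = Real.sqrt (8 / 3))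
    (hh : h = Real.sqrt 3)
    (hW0 : W0 = Real.pi ^ 2 / 3)
    (hW1 : W1 = Real.pi ^ 2 / 32)
    (hW2 : W2 = Real.pi ^ 2 / 48)
    :
    ∀ q : MvPolynomial (Fin 4) ℝ, q.totalDegree ≤ 5 →
      W0 * (MvPolynomial.eval ![0, 0, 0, 0] q)
        + W2 * (MvPolynomial.eval ![h, 0, 0, 0] q
          + MvPolynomial.eval ![-h, 0, 0, 0] q)
        + W1 * (MvPolynomial.eval ![0, h, 0, 0] q
          + MvPolynomial.eval ![0, -h, 0, 0] q
          + MvPolynomial.eval ![c, b, -a, c] q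
          + MvPolynomial.eval ![c, b, -a, -c] q
          + MvPolynomial.eval ![c, -b, a, c] q
          + MvPolynomial.eval ![c, -b, a, -c] q
          + MvPolynomial.eval ![-c, b, -a, c] q
          + MvPolynomial.eval ![-c, b, -a, -c] q
          + MvPolynomial.eval ![-c, -b, a, c] q
          + MvPolynomial.eval ![-c, -b, a, -c] q
          + MvPolynomial.eval ![c, b, e, 0] q
          + MvPolynomial.eval ![c, -b, -e, 0] q
          + MvPolynomial.eval ![-c, b, e, 0] q
          + MvPolynomial.eval ![-c, -b, -e, 0] q
          + MvPolynomial.eval ![0, a, -g, 0] q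
          + MvPolynomial.eval ![0, -a, g, 0] q
          + MvPolynomial.eval ![0, a, b, f] q
          + MvPolynomial.eval ![0, a, b, -f] q
          + MvPolynomial.eval ![0, -a, -b, f] q
          + MvPolynomial.eval ![0, -a, -b, -f] q)
        = ∫ x : Fin 4 → ℝ, Real.exp (-(∑ t, x t ^ 2)) * MvPolynomial.eval x q := by
  intro q hq
  have ha2 : a ^ 2 = 1 / 3 := by rw [ha]; exact Real.sq_sqrt (by norm_num)
  have hs2 : f ^ 2 = 2 := by rw [hf]; exact Real.sq_sqrt (by norm_num)
  have hb' : b = f * a := by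
    rw [hb, hf, ha, ← Real.sqrt_mul (by norm_num)]
    norm_num
  have he' : e = 2 * a := by
    rw [he, ha, show (4 / 3 : ℝ) = 2 ^ 2 * (1 / 3) by norm_num, Real.sqrt_mul (by norm_num),
      Real.sqrt_sq (by norm_num)]
  have hg' : g = 2 * f * a := by
    rw [hg, hf, ha, show (8 / 3 : ℝ) = 2 ^ 2 * (2 * (1 / 3)) by norm_num,
      Real.sqrt_mul (by norm_num), Real.sqrt_sq (by norm_num), Real.sqrt_mul (by norm_num),
      mul_assoc]
  have hh' : h = 3 * a := by
    rw [hh, ha, show (3 : ℝ) = 3 ^ 2 * (1 / 3) by norm_num, Real.sqrt_mul (by norm_num),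
      Real.sqrt_sq (by norm_num)]
    norm_num
  clear ha hb he hf hg hh
  subst hb' he' hg' hh' hc hW0 hW1 hW2
  have hint : ∫ x : Fin 4 → ℝ, Real.exp (-(∑ t, x t ^ 2)) * MvPolynomial.eval x q
      = ∑ d ∈ q.support, q.coeff d *
        ∫ x : Fin 4 → ℝ, Real.exp (-(∑ t, x t ^ 2)) * ∏ i, x i ^ d i := by
    simp only [← integral_const_mul]
    rw [← integral_finsetSum q.support fun (d : Fin 4 →₀ ℕ) _ =>
      (integrable_monomial d).const_mul (q.coeff d)]
    congr 1
    ext x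
    rw [MvPolynomial.eval_eq', Finset.mul_sum]
    exact Finset.sum_congr rfl fun d _ => by ring
  rw [hint]
  simp only [MvPolynomial.eval_eq', Finset.mul_sum, ← Finset.sum_add_distrib]
  refine Finset.sum_congr rfl fun d hd => ?_
  have hdeg : d 0 + d 1 + d 2 + d 3 ≤ 5 := by
    have h1 := (MvPolynomial.le_totalDegree hd).trans hq
    rwa [Finsupp.sum_fintype _ _ (fun _ => rfl), Fin.sum_univ_four] at h1
  have hle : ∀ i, d i ≤ 5 := by
    intro i
    fin_cases i <;> simp <;> omega
  rw [integral_monomial d hle, ← moment_equations a f ha2 hs2 _ _ _ _ hdeg]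
  simp only [Fin.prod_univ_four, Matrix.cons_val]
  ring
end

section
/- Set a = √(1/12), b = √(1/6), c = 1/2, e = √(1/3), f = √(1/2), g = √(2/3), h = √(3/4), and weights W₀ = π²/18, W₁ = π²/48, W₂ = π²/72. Consider the 23 nodes in ℝ⁴: the origin with weight W₀; (±h,0,0,0) with weight W₂ (2 points); (0,±h,0,0) with weight W₁ (2 points); the eight points (±c, σb, −σa, ±c) where σ ∈ {+1,−1} and the two ± signs on the first and fourth coordinates vary independently, each with weight W₁; the four points (±c, σb, σe, 0) with σ ∈ {+1,−1}, each with weight W₁; the two points (0, σa, −σg, 0) with σ ∈ {+1,−1}, each with weight W₁; and the four points (0, σa, σb, ±f) with σ ∈ {+1,−1} and independent ± sign, each with weight W₁. Then Σ W_i p(x_i) = ∫_{‖x‖≤1} p(x) dx for every real polynomial p in 4 variables of total degree at most 5. -/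
open MeasureTheory

/-!
Both sides are linear in the polynomial, so it suffices to compare them on monomials of degree at
most five.

The moments of the ball come from symmetry. A monomial with an odd exponent is odd under a change
of sign of one coordinate (`moment_odd`). The remaining moments are `∫ 1`, `∫ xᵢ²`, `∫ xᵢ⁴` and
`∫ xᵢ² xⱼ²`. Invariance under the reflection
`(xᵢ, xⱼ) ↦ ((xᵢ + xⱼ) / √2, (xᵢ - xⱼ) / √2)` shows that `∫ xᵢ²` and `∫ xᵢ⁴` do not depend on `i`
and that `∫ xᵢ² xⱼ² = (∫ xᵢ⁴) / 3`. These relations, together with the radial moments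
`∫ ‖x‖ ^ (2m) = π² / (m + 2)` obtained in polar coordinates (`integral_radial`), give the values
`π² / 2`, `π² / 12`, `π² / 32` and `π² / 96`.

All node coordinates lie in `ℚ(√2, √3)`, so the weighted sum of each of the finitely many monomials
is computed with `√2 ^ 2 = 2` and `√3 ^ 2 = 3` and agrees with the moment (`rule_monomial`).
-/

namespace BallCubature

/-- The closed Euclidean unit ball of `ℝ⁴`, in the coordinates `Fin 4 → ℝ`. -/
def ball4 : Set (Fin 4 → ℝ) := {y | ∑ t, y t ^ 2 ≤ 1}

/-! ### Integration over the ball -/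

lemma isClosed_ball4 : IsClosed ball4 :=
  isClosed_le (by fun_prop) continuous_const

lemma isCompact_ball4 : IsCompact ball4 := by
  refine (isCompact_closedBall (0 : Fin 4 → ℝ) 1).of_isClosed_subset isClosed_ball4 ?_
  intro y hy
  rw [mem_closedBall_zero_iff, pi_norm_le_iff_of_nonneg zero_le_one]
  intro i
  have h1 : y i ^ 2 ≤ ∑ t, y t ^ 2 :=
    Finset.single_le_sum (f := fun t => y t ^ 2) (fun t _ => sq_nonneg _) (Finset.mem_univ i)
  rw [Real.norm_eq_abs, ← sq_le_one_iff_abs_le_one]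
  exact h1.trans hy

lemma integrableOn_ball4 {u : (Fin 4 → ℝ) → ℝ} (hu : Continuous u) : IntegrableOn u ball4 :=
  hu.continuousOn.integrableOn_compact isCompact_ball4

/-- A linear involution has determinant `±1`, so it preserves Lebesgue measure; if it also
preserves `∑ xₜ²`, it leaves integrals over the ball unchanged. -/
lemma integral_comp_involution (T : (Fin 4 → ℝ) →ₗ[ℝ] (Fin 4 → ℝ))
    (hT : ∀ x, T (T x) = x) (hn : ∀ x, ∑ t, T x t ^ 2 = ∑ t, x t ^ 2)
    (u : (Fin 4 → ℝ) → ℝ) :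
    ∫ x in ball4, u (T x) = ∫ x in ball4, u x := by
  have hcomp : T ∘ₗ T = LinearMap.id := LinearMap.ext hT
  have hdet : LinearMap.det T * LinearMap.det T = 1 := by
    rw [← LinearMap.det_comp, hcomp, LinearMap.det_id]
  have hne : LinearMap.det T ≠ 0 := by
    intro h0
    simp [h0] at hdet
  have habs : |(LinearMap.det T)⁻¹| = 1 := by
    rcases mul_self_eq_one_iff.mp hdet with h1 | h1 <;> simp [h1]
  have hcont : Continuous T := T.continuous_of_finiteDimensional
  have hmap : MeasurePreserving T volume volume :=
    ⟨hcont.measurable, by simp [Real.map_linearMap_volume_pi_eq_smul_volume_pi hne, habs]⟩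
  let E : (Fin 4 → ℝ) ≃ᵐ (Fin 4 → ℝ) :=
    { toFun := T
      invFun := T
      left_inv := hT
      right_inv := hT
      measurable_toFun := hcont.measurable
      measurable_invFun := hcont.measurable }
  have hpre : T ⁻¹' ball4 = ball4 := by
    ext x
    simp only [ball4, Set.mem_preimage, Set.mem_ofPred_eq, hn]
  have := hmap.setIntegral_preimage_emb E.measurableEmbedding u ball4
  rwa [hpre] at this

/-! ### Radial moments -/

lemma integral_radial (m : ℕ) :
    ∫ x in ball4, (∑ t, x t ^ 2) ^ m = Real.pi ^ 2 / (m + 2) := by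
  have hB : MeasurableSet ball4 := isClosed_ball4.measurableSet
  have hvol : (volume : Measure (EuclideanSpace ℝ (Fin 4))).real (Metric.ball 0 1)
      = Real.pi ^ 2 / 2 := by
    rw [measureReal_def, InnerProductSpace.volume_ball_of_dim_even (k := 2) (by simp)]
    simp only [ENNReal.ofReal_one, one_pow, one_mul]
    rw [ENNReal.toReal_ofReal (by positivity)]
    simp
  have hnorm : ∀ x : Fin 4 → ℝ, ∑ t, x t ^ 2 = ‖(WithLp.toLp 2 x : EuclideanSpace ℝ (Fin 4))‖ ^ 2 := by
    intro x
    rw [EuclideanSpace.norm_sq_eq]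
    simp
  -- The radial profile: `y ^ (2m)` cut off at `y = 1`.
  let φ : ℝ → ℝ := (Set.Iic 1).indicator fun y => y ^ (2 * m)
  have h1 : ∫ x in ball4, (∑ t, x t ^ 2) ^ m
      = ∫ x : Fin 4 → ℝ, φ ‖(WithLp.toLp 2 x : EuclideanSpace ℝ (Fin 4))‖ := by
    rw [← integral_indicator hB]
    congr 1
    ext x
    by_cases hx : x ∈ ball4
    · have hx' : ‖(WithLp.toLp 2 x : EuclideanSpace ℝ (Fin 4))‖ ∈ Set.Iic (1 : ℝ) := by
        have h2 : ∑ t, x t ^ 2 ≤ 1 := hx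
        rw [hnorm] at h2
        exact (sq_le_one_iff₀ (norm_nonneg _)).mp h2
      have hφ : φ ‖(WithLp.toLp 2 x : EuclideanSpace ℝ (Fin 4))‖ = _ := Set.indicator_of_mem hx' _
      rw [Set.indicator_of_mem hx, hφ, hnorm, pow_mul]
    · have hx' : ‖(WithLp.toLp 2 x : EuclideanSpace ℝ (Fin 4))‖ ∉ Set.Iic (1 : ℝ) := by
        intro h2
        apply hx
        change ∑ t, x t ^ 2 ≤ 1
        rw [hnorm]
        exact (sq_le_one_iff₀ (norm_nonneg _)).mpr h2
      have hφ : φ ‖(WithLp.toLp 2 x : EuclideanSpace ℝ (Fin 4))‖ = 0 := Set.indicator_of_notMem hx' _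
      rw [Set.indicator_of_notMem hx, hφ]
  have h2 : ∫ x : Fin 4 → ℝ, φ ‖(WithLp.toLp 2 x : EuclideanSpace ℝ (Fin 4))‖
      = ∫ x : EuclideanSpace ℝ (Fin 4), φ ‖x‖ :=
    (PiLp.volume_preserving_toLp (Fin 4)).integral_comp
      (MeasurableEquiv.toLp 2 (Fin 4 → ℝ)).measurableEmbedding (fun x => φ ‖x‖)
  have h3 : ∫ y in Set.Ioi (0 : ℝ), y ^ 3 • φ y = 1 / (2 * m + 4) := by
    have h4 : ∀ y : ℝ, y ^ 3 • φ y = (Set.Iic 1).indicator (fun y => y ^ (2 * m + 3)) y := by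
      intro y
      by_cases hy : y ∈ Set.Iic (1 : ℝ)
      · simp only [φ, Set.indicator_of_mem hy, smul_eq_mul]
        ring
      · simp only [φ, Set.indicator_of_notMem hy, smul_zero]
    simp_rw [h4]
    rw [setIntegral_indicator measurableSet_Iic, Set.Ioi_inter_Iic,
      ← intervalIntegral.integral_of_le zero_le_one, integral_pow]
    push_cast
    simp
    ring
  rw [h1, h2, integral_fun_norm_addHaar volume φ, hvol]
  simp only [finrank_euclideanSpace, Fintype.card_fin, nsmul_eq_mul, smul_eq_mul,
    Nat.add_one_sub_one] at h3 ⊢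
  rw [h3]
  have : (m : ℝ) + 2 ≠ 0 := by positivity
  have : (2 * m : ℝ) + 4 ≠ 0 := by positivity
  push_cast
  field_simp
  ring

/-! ### Moments of degree at most five -/

/-- Change of sign of the `i`-th coordinate. -/
def flip (i : Fin 4) : (Fin 4 → ℝ) →ₗ[ℝ] (Fin 4 → ℝ) where
  toFun x k := if k = i then -x i else x k
  map_add' x y := by
    ext k
    by_cases h : k = i <;> simp [h]
    ring
  map_smul' r x := by
    ext k
    by_cases h : k = i <;> simp [h]

/-- For `i ≠ j`, the orthogonal reflection
`(xᵢ, xⱼ) ↦ ((xᵢ + xⱼ) / √2, (xᵢ - xⱼ) / √2)`. -/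
noncomputable def tilt (i j : Fin 4) : (Fin 4 → ℝ) →ₗ[ℝ] (Fin 4 → ℝ) where
  toFun x k := if k = i then (x i + x j) / √2 else if k = j then (x i - x j) / √2 else x k
  map_add' x y := by
    ext k
    simp only [Pi.add_apply]
    split_ifs <;> ring
  map_smul' r x := by
    ext k
    simp only [Pi.smul_apply, smul_eq_mul, RingHom.id_apply]
    split_ifs <;> ring

lemma integral_comp_flip (i : Fin 4) (u : (Fin 4 → ℝ) → ℝ) :
    ∫ x in ball4, u (flip i x) = ∫ x in ball4, u x := by
  refine integral_comp_involution _ (fun x => ?_) (fun x => ?_) u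
  · ext k
    by_cases h : k = i <;> simp [flip, h]
  · refine Finset.sum_congr rfl fun k _ => ?_
    by_cases h : k = i <;> simp [flip, h]

lemma integral_comp_tilt {i j : Fin 4} (hij : i ≠ j) (u : (Fin 4 → ℝ) → ℝ) :
    ∫ x in ball4, u (tilt i j x) = ∫ x in ball4, u x := by
  have hs : √2 ^ 2 = (2 : ℝ) := Real.sq_sqrt (by norm_num)
  have hs0 : √2 ≠ (0 : ℝ) := by positivity
  refine integral_comp_involution _ (fun x => ?_) (fun x => ?_) u
  · ext k
    simp only [tilt, LinearMap.coe_mk, AddHom.coe_mk, if_true, if_neg hij.symm]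
    split_ifs with h h'
    · subst h
      field_simp
      rw [hs]
      ring
    · subst h'
      field_simp
      rw [hs]
      ring
    · rfl
  · have e1 : ((x i + x j) / √2) ^ 2 = (x i + x j) ^ 2 / 2 := by rw [div_pow, hs]
    have e2 : ((x i - x j) / √2) ^ 2 = (x i - x j) ^ 2 / 2 := by rw [div_pow, hs]
    simp only [tilt, LinearMap.coe_mk, AddHom.coe_mk]
    fin_cases i <;> fin_cases j <;> simp [Fin.sum_univ_four] at hij e1 e2 ⊢ <;>
      rw [e1, e2] <;> ring

/-- The moment `∫ x^d` of the unit ball. -/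
noncomputable def moment (d : Fin 4 → ℕ) : ℝ := ∫ x in ball4, ∏ t, x t ^ d t

/-- A function that is odd in one coordinate integrates to zero. -/
lemma integral_odd (i : Fin 4) {u : (Fin 4 → ℝ) → ℝ} (hu : ∀ x, u (flip i x) = -u x) :
    ∫ x in ball4, u x = 0 := by
  have h := integral_comp_flip i u
  simp_rw [hu, integral_neg] at h
  linarith

lemma moment_odd (d : Fin 4 → ℕ) (i : Fin 4) (hi : Odd (d i)) : moment d = 0 := by
  refine integral_odd i fun x => ?_
  rw [← Finset.mul_prod_erase _ _ (Finset.mem_univ i),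
    ← Finset.mul_prod_erase _ (fun t => x t ^ d t) (Finset.mem_univ i), ← neg_mul, ← hi.neg_pow]
  congr 1
  · simp [flip]
  · refine Finset.prod_congr rfl fun k hk => ?_
    simp [flip, Finset.ne_of_mem_erase hk]

/-- Invariance under `tilt` turns `∫ xᵢ²` into the mean of `∫ xᵢ²` and `∫ xⱼ²`. -/
lemma integral_sq_eq {i j : Fin 4} (hij : i ≠ j) :
    ∫ x in ball4, x i ^ 2 = ∫ x in ball4, x j ^ 2 := by
  have hs : √2 ^ 2 = (2 : ℝ) := Real.sq_sqrt (by norm_num)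
  have h := integral_comp_tilt hij fun x => x i ^ 2
  have h' : ∀ x, tilt i j x i ^ 2 = 1 / 2 * x i ^ 2 + 1 / 2 * x j ^ 2 + x i * x j := by
    intro x
    simp only [tilt, LinearMap.coe_mk, AddHom.coe_mk, if_true, div_pow, hs]
    ring
  have hodd : ∫ x in ball4, x i * x j = 0 :=
    integral_odd i fun x => by simp [flip, hij.symm]
  simp_rw [h'] at h
  rw [integral_add (integrableOn_ball4 (by fun_prop)) (integrableOn_ball4 (by fun_prop)),
    integral_add (integrableOn_ball4 (by fun_prop)) (integrableOn_ball4 (by fun_prop)),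
    integral_const_mul, integral_const_mul, hodd] at h
  linarith

/-- Expansion of `((xᵢ + xⱼ) / √2)⁴`; the terms odd in `xᵢ` integrate to zero. -/
lemma integral_fourth_eq {i j : Fin 4} (hij : i ≠ j) :
    4 * ∫ x in ball4, x i ^ 4
      = (∫ x in ball4, x i ^ 4) + (∫ x in ball4, x j ^ 4)
        + 6 * ∫ x in ball4, x i ^ 2 * x j ^ 2 := by
  have hs : √2 ^ 4 = (4 : ℝ) := by
    rw [show 4 = 2 * 2 from rfl, pow_mul, Real.sq_sqrt (by norm_num)]
    norm_num
  have h := integral_comp_tilt hij fun x => x i ^ 4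
  have h' : ∀ x, tilt i j x i ^ 4 = 1 / 4 * x i ^ 4 + 1 / 4 * x j ^ 4
      + 3 / 2 * (x i ^ 2 * x j ^ 2) + (x i ^ 3 * x j + x i * x j ^ 3) := by
    intro x
    simp only [tilt, LinearMap.coe_mk, AddHom.coe_mk, if_true, div_pow, hs]
    ring
  have hodd : ∫ x in ball4, (x i ^ 3 * x j + x i * x j ^ 3) = 0 :=
    integral_odd i fun x => by
      simp only [flip, LinearMap.coe_mk, AddHom.coe_mk, if_true, if_neg hij.symm]
      ring
  simp_rw [h'] at h
  rw [integral_add (integrableOn_ball4 (by fun_prop)) (integrableOn_ball4 (by fun_prop)),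
    integral_add (integrableOn_ball4 (by fun_prop)) (integrableOn_ball4 (by fun_prop)),
    integral_add (integrableOn_ball4 (by fun_prop)) (integrableOn_ball4 (by fun_prop)),
    integral_const_mul, integral_const_mul, integral_const_mul, hodd] at h
  linarith

lemma volume_ball4 : (volume : Measure (Fin 4 → ℝ)).real ball4 = Real.pi ^ 2 / 2 := by
  simpa using integral_radial 0

lemma integral_sq (i : Fin 4) : ∫ x in ball4, x i ^ 2 = Real.pi ^ 2 / 12 := by
  have h := integral_radial 1
  simp_rw [pow_one] at h
  rw [integral_finsetSum _ fun t _ => integrableOn_ball4 (by fun_prop)] at h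
  have h' : ∀ t ∈ Finset.univ, ∫ x in ball4, x t ^ 2 = ∫ x in ball4, x i ^ 2 := by
    intro t _
    rcases eq_or_ne t i with rfl | hti
    · rfl
    · exact integral_sq_eq hti
  rw [Finset.sum_congr rfl h'] at h
  simp at h
  linarith

lemma integral_sq_mul_sq' {i j : Fin 4} (hij : i ≠ j) :
    ∫ x in ball4, x i ^ 2 * x j ^ 2 = (∫ x in ball4, x i ^ 4) / 3
      ∧ ∫ x in ball4, x j ^ 4 = ∫ x in ball4, x i ^ 4 := by
  have h1 := integral_fourth_eq hij
  have h2 := integral_fourth_eq hij.symm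
  have hcomm : ∫ x in ball4, x j ^ 2 * x i ^ 2 = ∫ x in ball4, x i ^ 2 * x j ^ 2 := by
    congr 1
    ext x
    ring
  constructor <;> linarith

lemma integral_fourth (i : Fin 4) : ∫ x in ball4, x i ^ 4 = Real.pi ^ 2 / 32 := by
  have h := integral_radial 2
  have hexp : ∀ x : Fin 4 → ℝ, (∑ t, x t ^ 2) ^ 2 = ∑ s, ∑ t, x s ^ 2 * x t ^ 2 := by
    intro x
    rw [sq, Finset.sum_mul_sum]
  simp_rw [hexp] at h
  rw [integral_finsetSum _ fun s _ => integrableOn_ball4 (by fun_prop)] at h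
  have h4 : ∀ t, ∫ x in ball4, x t ^ 4 = ∫ x in ball4, x i ^ 4 := by
    intro t
    rcases eq_or_ne t i with rfl | hti
    · rfl
    · exact (integral_sq_mul_sq' hti.symm).2
  have h' : ∀ s ∈ Finset.univ, ∫ x in ball4, ∑ t, x s ^ 2 * x t ^ 2
      = ∑ t, (if t = s then 1 else 1 / 3) * ∫ x in ball4, x i ^ 4 := by
    intro s _
    rw [integral_finsetSum _ fun t _ => integrableOn_ball4 (by fun_prop)]
    refine Finset.sum_congr rfl fun t _ => ?_
    split_ifs with hts
    · subst hts
      simp_rw [← pow_add]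
      rw [one_mul, h4]
    · rw [(integral_sq_mul_sq' (Ne.symm hts)).1, h4]
      ring
  rw [Finset.sum_congr rfl h'] at h
  simp [Fin.sum_univ_four] at h
  linarith

lemma integral_sq_mul_sq {i j : Fin 4} (hij : i ≠ j) :
    ∫ x in ball4, x i ^ 2 * x j ^ 2 = Real.pi ^ 2 / 96 := by
  rw [(integral_sq_mul_sq' hij).1, integral_fourth]
  ring

/-! ### The cubature rule -/

/-- The weighted sum over the 23 nodes, as a linear functional of the integrand. -/
def rule (a b c e f g h W0 W1 W2 : ℝ) : ((Fin 4 → ℝ) → ℝ) →ₗ[ℝ] ℝ where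
  toFun u := W0 * u ![0, 0, 0, 0]
    + W2 * (u ![h, 0, 0, 0] + u ![-h, 0, 0, 0])
    + W1 * (u ![0, h, 0, 0] + u ![0, -h, 0, 0]
      + u ![c, b, -a, c] + u ![c, b, -a, -c] + u ![c, -b, a, c] + u ![c, -b, a, -c]
      + u ![-c, b, -a, c] + u ![-c, b, -a, -c] + u ![-c, -b, a, c] + u ![-c, -b, a, -c]
      + u ![c, b, e, 0] + u ![c, -b, -e, 0] + u ![-c, b, e, 0] + u ![-c, -b, -e, 0]
      + u ![0, a, -g, 0] + u ![0, -a, g, 0]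
      + u ![0, a, b, f] + u ![0, a, b, -f] + u ![0, -a, -b, f] + u ![0, -a, -b, -f])
  map_add' u v := by
    simp only [Pi.add_apply]
    ring
  map_smul' r u := by
    simp only [Pi.smul_apply, smul_eq_mul, RingHom.id_apply]
    ring

set_option maxHeartbeats 4000000 in
/-- Exactness on monomials, with `s` and `t` standing for `√2` and `√3`. -/
lemma rule_monomial (s t : ℝ) (hs : s ^ 2 = 2) (ht : t ^ 2 = 3) (i j k l : ℕ)
    (hd : i + j + k + l ≤ 5) :
    rule (t / 6) (s * t / 6) (1 / 2) (t / 3) (s / 2) (s * t / 3) (t / 2)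
      (Real.pi ^ 2 / 18) (Real.pi ^ 2 / 48) (Real.pi ^ 2 / 72)
      (fun x => ∏ n, x n ^ (![i, j, k, l] : Fin 4 → ℕ) n) = moment ![i, j, k, l] := by
  have hs3 : s ^ 3 = 2 * s := by rw [pow_succ, hs]
  have hs4 : s ^ 4 = 4 := by rw [pow_succ, hs3]; linear_combination 2 * hs
  have ht4 : t ^ 4 = 9 := by rw [show 4 = 2 * 2 from rfl, pow_mul, ht]; norm_num
  have hi : i ≤ 5 := by omega
  have hj : j ≤ 5 - i := by omega
  have hk : k ≤ 5 - i - j := by omega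
  have hl : l ≤ 5 - i - j - k := by omega
  clear hd
  interval_cases i <;> interval_cases j <;> interval_cases k <;> interval_cases l <;>
  -- Monomials with an odd exponent have moment `0`; the others are the even moments found above.
  (first
    | rw [moment_odd _ 0 (by decide)]
    | rw [moment_odd _ 1 (by decide)]
    | rw [moment_odd _ 2 (by decide)]
    | rw [moment_odd _ 3 (by decide)]
    | unfold moment) <;>
  simp [rule, Fin.prod_univ_four, volume_ball4, integral_sq, integral_fourth,
    integral_sq_mul_sq] <;>
  (try ring_nf) <;>
  (try simp only [hs, hs3, hs4, ht, ht4]) <;>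
  (try ring_nf)

end BallCubature

/-- 23 point rule of degree 5 for `S_4`. -/
theorem stmt_16 (a b c e f g h W0 W1 W2 : ℝ)
    (ha : a = Real.sqrt (1 / 12))
    (hb : b = Real.sqrt (1 / 6))
    (hc : c = 1 / 2)
    (he : e = Real.sqrt (1 / 3))
    (hf : f = Real.sqrt (1 / 2))
    (hg : g = Real.sqrt (2 / 3))
    (hh : h = Real.sqrt (3 / 4))
    (hW0 : W0 = Real.pi ^ 2 / 18)
    (hW1 : W1 = Real.pi ^ 2 / 48)
    (hW2 : W2 = Real.pi ^ 2 / 72)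
    :
    ∀ q : MvPolynomial (Fin 4) ℝ, q.totalDegree ≤ 5 →
      W0 * (MvPolynomial.eval ![0, 0, 0, 0] q)
        + W2 * (MvPolynomial.eval ![h, 0, 0, 0] q
          + MvPolynomial.eval ![-h, 0, 0, 0] q)
        + W1 * (MvPolynomial.eval ![0, h, 0, 0] q
          + MvPolynomial.eval ![0, -h, 0, 0] q
          + MvPolynomial.eval ![c, b, -a, c] q
          + MvPolynomial.eval ![c, b, -a, -c] q
          + MvPolynomial.eval ![c, -b, a, c] q
          + MvPolynomial.eval ![c, -b, a, -c] q
          + MvPolynomial.eval ![-c, b, -a, c] q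
          + MvPolynomial.eval ![-c, b, -a, -c] q
          + MvPolynomial.eval ![-c, -b, a, c] q
          + MvPolynomial.eval ![-c, -b, a, -c] q
          + MvPolynomial.eval ![c, b, e, 0] q
          + MvPolynomial.eval ![c, -b, -e, 0] q
          + MvPolynomial.eval ![-c, b, e, 0] q
          + MvPolynomial.eval ![-c, -b, -e, 0] q
          + MvPolynomial.eval ![0, a, -g, 0] q
          + MvPolynomial.eval ![0, -a, g, 0] q
          + MvPolynomial.eval ![0, a, b, f] q
          + MvPolynomial.eval ![0, a, b, -f] q
          + MvPolynomial.eval ![0, -a, -b, f] q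
          + MvPolynomial.eval ![0, -a, -b, -f] q)
        = ∫ x in {y : Fin 4 → ℝ | ∑ t, y t ^ 2 ≤ 1}, MvPolynomial.eval x q := by
  intro q hq
  -- All coordinates lie in `ℚ(√2, √3)`.
  have hs : √2 ^ 2 = (2 : ℝ) := Real.sq_sqrt (by norm_num)
  have ht : √3 ^ 2 = (3 : ℝ) := Real.sq_sqrt (by norm_num)
  have ha' : a = √3 / 6 := by
    rw [ha, Real.sqrt_eq_iff_eq_sq (by norm_num) (by positivity), div_pow, ht]
    norm_num
  have hb' : b = √2 * √3 / 6 := by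
    rw [hb, Real.sqrt_eq_iff_eq_sq (by norm_num) (by positivity), div_pow, mul_pow, hs, ht]
    norm_num
  have he' : e = √3 / 3 := by
    rw [he, Real.sqrt_eq_iff_eq_sq (by norm_num) (by positivity), div_pow, ht]
    norm_num
  have hf' : f = √2 / 2 := by
    rw [hf, Real.sqrt_eq_iff_eq_sq (by norm_num) (by positivity), div_pow, hs]
    norm_num
  have hg' : g = √2 * √3 / 3 := by
    rw [hg, Real.sqrt_eq_iff_eq_sq (by norm_num) (by positivity), div_pow, mul_pow, hs, ht]
    norm_num
  have hh' : h = √3 / 2 := by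
    rw [hh, Real.sqrt_eq_iff_eq_sq (by norm_num) (by positivity), div_pow, ht]
    norm_num
  change BallCubature.rule a b c e f g h W0 W1 W2 (fun x => MvPolynomial.eval x q)
    = ∫ x in BallCubature.ball4, MvPolynomial.eval x q
  have hq_sum : (fun x : Fin 4 → ℝ => MvPolynomial.eval x q)
      = ∑ d ∈ q.support, q.coeff d • fun x : Fin 4 → ℝ => ∏ n, x n ^ d n := by
    ext x
    simp [MvPolynomial.eval_eq', Finset.sum_apply]
  have hint : ∫ x in BallCubature.ball4, MvPolynomial.eval x q
      = ∑ d ∈ q.support, q.coeff d * BallCubature.moment d := by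
    simp_rw [MvPolynomial.eval_eq']
    rw [integral_finsetSum _ fun d _ => BallCubature.integrableOn_ball4 (by fun_prop)]
    simp_rw [integral_const_mul]
    rfl
  rw [hint, hq_sum, map_sum]
  refine Finset.sum_congr rfl fun d hd => ?_
  rw [map_smul, smul_eq_mul]
  congr 1
  have hdeg : d 0 + d 1 + d 2 + d 3 ≤ 5 := by
    have h1 := (MvPolynomial.le_totalDegree hd).trans hq
    rwa [Finsupp.sum_fintype _ _ (fun _ => rfl), Fin.sum_univ_four] at h1
  have hvec : (![d 0, d 1, d 2, d 3] : Fin 4 → ℕ) = d := by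
    ext n
    fin_cases n <;> rfl
  have key := BallCubature.rule_monomial √2 √3 hs ht _ _ _ _ hdeg
  rw [hvec] at key
  rw [ha', hb', hc, he', hf', hg', hh', hW0, hW1, hW2]
  exact key
end

section
/- Set g = √(2(4−√6)), c = √((4−√6)/2), f = √(3(4−√6)/2), a = √((4−√6)/8), b = √(3(4−√6)/8), e = √((6+√6)/8), h = √(3(6+√6)/8), i = √((6+√6)/2), and weights W₀ = (16−√6)π³/100, W₁ = (68+27√6)π³/9000, W₂ = (54−19√6)π³/9000. Consider the 127 nodes in ℝ⁶: the origin with weight W₀; with weight W₁ the 54 points: (±g,0,0,0,0,0) [2 points], the points with first coordinate ±c and ±f in exactly one of the other five coordinates (zeros elsewhere) [20 points], and ±v for each v of the form (a, w) where w is a coordinate permutation of (b,b,b,b,b) [2 points], of (b,b,b,−b,−b) [20 points], or of (b,−b,−b,−b,−b) [10 points] over the last five coordinates; with weight W₂ the 72 points: ±v for each v of the form (h, w) where w is a coordinate permutation of (e,e,e,e,−e) [10 points], of (e,e,−e,−e,−e) [20 points], or equals (−e,−e,−e,−e,−e) [2 points], together with the 40 points with first coordinate 0 having ±i in exactly two of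 the last five coordinates (signs independent) and zeros elsewhere. Then Σ W_i p(x_i) = ∫_{ℝ⁶} e^{−‖x‖²} p(x) dx for every real polynomial p in 6 variables of total degree at most 7. -/
open MeasureTheory

/-!
By linearity it is enough to treat monomials `∏ x_j ^ k_j` of degree at most 7
(`eq_integral_of_monomials`). Their Gaussian integrals factor into one-dimensional moments, which
vanish for odd exponents and equal `Γ(m + 1/2) = √π (2m - 1)‼ / 2 ^ m` for exponent `2m`.

On the side of the rule, the nodes form a few orbits under sign changes and permutations of the last
five coordinates, and summing a product function `∏ F_j(x_j)` over an orbit gives an expression in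
the values `F_j(0)`, the even parts `F_j(x) + F_j(-x)` and the odd parts `F_j(x) - F_j(-x)`
(`orbitSum`). Odd parts occur only in the product of all six of them. Hence for a monomial
(`orbitSum_monomial`) there are three cases:
* some exponent is odd and some exponent is even: every term vanishes;
* all exponents are odd: as the degree is at most 7, the monomial is `x₀x₁x₂x₃x₄x₅`, and the two
  remaining terms cancel because `W₁ a b⁵ = W₂ h e⁵`;
* all exponents are even, `k_j = 2 m_j` with `∑ m_j ≤ 3`: only squares of coordinates occur, and
  what is left are finitely many identities in `ℚ(√6)` (`even_moment_equations`).
-/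

/-! ### Gaussian moments -/

theorem integrable_gaussian_pow (n : ℕ) :
    Integrable (fun x : ℝ => Real.exp (-x ^ 2) * x ^ n) := by
  have := integrable_rpow_mul_exp_neg_mul_sq (b := 1) one_pos (s := n)
    (by have : (0 : ℝ) ≤ n := n.cast_nonneg
        linarith)
  refine this.congr (Filter.Eventually.of_forall fun x => ?_)
  simp [Real.rpow_natCast, mul_comm]

theorem integral_gaussian_pow_odd {n : ℕ} (hn : Odd n) :
    ∫ x : ℝ, Real.exp (-x ^ 2) * x ^ n = 0 := by
  have h := integral_neg_eq_self (fun x : ℝ => Real.exp (-x ^ 2) * x ^ n) volume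
  simp only [neg_sq, hn.neg_pow, mul_neg, integral_neg] at h
  linarith

/-- The even one-dimensional moments, normalised by the total mass `√π`: `(2m - 1)‼ / 2 ^ m`.
For `m = 0` the truncated subtraction gives `0‼ = 1`, the correct value. -/
noncomputable def evenMoment (m : ℕ) : ℝ := ((2 * m - 1 : ℕ).doubleFactorial : ℝ) / 2 ^ m

theorem integral_gaussian_pow_even (m : ℕ) :
    ∫ x : ℝ, Real.exp (-x ^ 2) * x ^ (2 * m) = Real.sqrt Real.pi * evenMoment m := by
  have h1 : ∀ x : ℝ, Real.exp (-x ^ 2) * x ^ (2 * m)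
      = (fun y : ℝ => y ^ ((2 * m : ℕ) : ℝ) * Real.exp (-y ^ (2 : ℝ))) |x| := by
    intro x
    simp only [Real.rpow_natCast, Real.rpow_two, sq_abs, pow_mul]
    ring
  rw [integral_congr_ae (Filter.Eventually.of_forall h1), integral_comp_abs
    (f := fun y : ℝ => y ^ ((2 * m : ℕ) : ℝ) * Real.exp (-y ^ (2 : ℝ))),
    integral_rpow_mul_exp_neg_rpow two_pos (by
      have : (0 : ℝ) ≤ ((2 * m : ℕ) : ℝ) := Nat.cast_nonneg _
      linarith)]
  have h2 : (((2 * m : ℕ) : ℝ) + 1) / 2 = m + 1 / 2 := by push_cast; ring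
  rw [h2, Real.Gamma_nat_add_half, evenMoment]
  ring

theorem exp_mul_prod_pow (k : Fin 6 → ℕ) (x : Fin 6 → ℝ) :
    Real.exp (-(∑ t, x t ^ 2)) * ∏ j, x j ^ k j = ∏ j, (Real.exp (-x j ^ 2) * x j ^ k j) := by
  rw [Finset.prod_mul_distrib, ← Real.exp_sum, Finset.sum_neg_distrib]

theorem integrable_gaussian_monomial (k : Fin 6 → ℕ) :
    Integrable (fun x : Fin 6 → ℝ => Real.exp (-(∑ t, x t ^ 2)) * ∏ j, x j ^ k j) := by
  simp_rw [exp_mul_prod_pow]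
  exact Integrable.fintype_prod fun j => integrable_gaussian_pow (k j)

theorem integral_gaussian_monomial (k : Fin 6 → ℕ) :
    ∫ x : Fin 6 → ℝ, Real.exp (-(∑ t, x t ^ 2)) * ∏ j, x j ^ k j
      = ∏ j, ∫ x : ℝ, Real.exp (-x ^ 2) * x ^ k j := by
  simp_rw [exp_mul_prod_pow]
  exact integral_fintype_prod_volume_eq_prod (fun j (x : ℝ) => Real.exp (-x ^ 2) * x ^ k j)

/-- A linear functional on polynomials that has the right value on monomials of degree at most 7
agrees with the Gaussian integral on all polynomials of degree at most 7. -/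
theorem eq_integral_of_monomials (F : MvPolynomial (Fin 6) ℝ → ℝ)
    (hadd : ∀ p q, F (p + q) = F p + F q)
    (hsmul : ∀ (r : ℝ) q, F (MvPolynomial.C r * q) = r * F q)
    (hmon : ∀ k : Fin 6 →₀ ℕ, ∑ j, k j ≤ 7 →
      F (MvPolynomial.monomial k 1) = ∏ j, ∫ x : ℝ, Real.exp (-x ^ 2) * x ^ k j)
    (q : MvPolynomial (Fin 6) ℝ) (hq : q.totalDegree ≤ 7) :
    F q = ∫ x : Fin 6 → ℝ, Real.exp (-(∑ t, x t ^ 2)) * MvPolynomial.eval x q := by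
  have h0 : F 0 = 0 := by simpa using hsmul 0 0
  let G : MvPolynomial (Fin 6) ℝ →+ ℝ := { toFun := F, map_zero' := h0, map_add' := hadd }
  have hF : F q = ∑ k ∈ q.support, q.coeff k * F (MvPolynomial.monomial k 1) := by
    conv_lhs => rw [q.as_sum]
    change G _ = _
    rw [map_sum]
    refine Finset.sum_congr rfl fun k _ => ?_
    change F _ = _
    rw [← hsmul, MvPolynomial.C_mul_monomial, mul_one]
  rw [hF]
  simp_rw [MvPolynomial.eval_eq', Finset.mul_sum]
  rw [integral_finsetSum]
  · refine Finset.sum_congr rfl fun k hk => ?_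
    have hdeg : ∑ j, k j ≤ 7 := by
      have := MvPolynomial.le_totalDegree hk
      rw [Finsupp.sum_fintype _ _ (fun _ => rfl)] at this
      exact this.trans hq
    rw [hmon k hdeg, ← integral_gaussian_monomial, ← integral_const_mul]
    congr 1 with x
    ring
  · intro k _
    refine ((integrable_gaussian_monomial k).const_mul (q.coeff k)).congr
      (Filter.Eventually.of_forall fun x => ?_)
    simp only
    ring

/-! ### The rule on monomials -/

/-- The value of the rule on `∏ F j (x j)`, summed orbit by orbit. The nodes `±(a, ±b, …, ±b)` with
`x₀ ⋯ x₅ > 0` and the nodes `±(h, ±e, …, ±e)` with `x₀ ⋯ x₅ < 0` contribute a product of even parts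
plus or minus a product of odd parts. -/
noncomputable def orbitSum (a b c e f g h i W0 W1 W2 : ℝ) (F : Fin 6 → ℝ → ℝ) : ℝ :=
  let E : Fin 6 → ℝ → ℝ := fun j x => F j x + F j (-x)
  let O : Fin 6 → ℝ → ℝ := fun j x => F j x - F j (-x)
  let z : Fin 6 → ℝ := fun j => F j 0
  W0 * (z 0 * z 1 * z 2 * z 3 * z 4 * z 5)
  + W1 * (E 0 g * (z 1 * z 2 * z 3 * z 4 * z 5)
    + E 0 c * (E 1 f * z 2 * z 3 * z 4 * z 5 + z 1 * E 2 f * z 3 * z 4 * z 5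
      + z 1 * z 2 * E 3 f * z 4 * z 5 + z 1 * z 2 * z 3 * E 4 f * z 5
      + z 1 * z 2 * z 3 * z 4 * E 5 f)
    + (E 0 a * (E 1 b * E 2 b * E 3 b * E 4 b * E 5 b)
      + O 0 a * (O 1 b * O 2 b * O 3 b * O 4 b * O 5 b)) / 2)
  + W2 * ((E 0 h * (E 1 e * E 2 e * E 3 e * E 4 e * E 5 e)
      - O 0 h * (O 1 e * O 2 e * O 3 e * O 4 e * O 5 e)) / 2
    + z 0 * (E 1 i * E 2 i * z 3 * z 4 * z 5 + E 1 i * z 2 * E 3 i * z 4 * z 5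
      + E 1 i * z 2 * z 3 * E 4 i * z 5 + E 1 i * z 2 * z 3 * z 4 * E 5 i
      + z 1 * E 2 i * E 3 i * z 4 * z 5 + z 1 * E 2 i * z 3 * E 4 i * z 5
      + z 1 * E 2 i * z 3 * z 4 * E 5 i + z 1 * z 2 * E 3 i * E 4 i * z 5
      + z 1 * z 2 * E 3 i * z 4 * E 5 i + z 1 * z 2 * z 3 * E 4 i * E 5 i))

/-- The moment equations for monomials with even exponents `2 m j`, after dividing by `π ^ 3` and
replacing the squares of the coordinates by their values; `s` stands for `√6`. -/
theorem even_moment_equations (s : ℝ) (hs : s ^ 2 = 6) (m₀ m₁ m₂ m₃ m₄ m₅ : ℕ)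
    (hm : m₀ + m₁ + m₂ + m₃ + m₄ + m₅ ≤ 3) :
    (16 - s) / 100 * ((0 : ℝ) ^ m₀ * 0 ^ m₁ * 0 ^ m₂ * 0 ^ m₃ * 0 ^ m₄ * 0 ^ m₅)
    + (68 + 27 * s) / 9000 * (2 * ((4 - s) * 2) ^ m₀ * (0 ^ m₁ * 0 ^ m₂ * 0 ^ m₃ * 0 ^ m₄ * 0 ^ m₅)
      + 4 * ((4 - s) / 2) ^ m₀ * (((4 - s) * 3 / 2) ^ m₁ * 0 ^ m₂ * 0 ^ m₃ * 0 ^ m₄ * 0 ^ m₅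
        + 0 ^ m₁ * ((4 - s) * 3 / 2) ^ m₂ * 0 ^ m₃ * 0 ^ m₄ * 0 ^ m₅
        + 0 ^ m₁ * 0 ^ m₂ * ((4 - s) * 3 / 2) ^ m₃ * 0 ^ m₄ * 0 ^ m₅
        + 0 ^ m₁ * 0 ^ m₂ * 0 ^ m₃ * ((4 - s) * 3 / 2) ^ m₄ * 0 ^ m₅
        + 0 ^ m₁ * 0 ^ m₂ * 0 ^ m₃ * 0 ^ m₄ * ((4 - s) * 3 / 2) ^ m₅)
      + 32 * ((4 - s) / 8) ^ m₀ * ((4 - s) * 3 / 8) ^ (m₁ + m₂ + m₃ + m₄ + m₅))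
    + (54 - 19 * s) / 9000 *
      (32 * ((6 + s) * 3 / 8) ^ m₀ * ((6 + s) / 8) ^ (m₁ + m₂ + m₃ + m₄ + m₅)
      + 4 * 0 ^ m₀ * (((6 + s) / 2) ^ (m₁ + m₂) * 0 ^ m₃ * 0 ^ m₄ * 0 ^ m₅
        + ((6 + s) / 2) ^ (m₁ + m₃) * 0 ^ m₂ * 0 ^ m₄ * 0 ^ m₅
        + ((6 + s) / 2) ^ (m₁ + m₄) * 0 ^ m₂ * 0 ^ m₃ * 0 ^ m₅
        + ((6 + s) / 2) ^ (m₁ + m₅) * 0 ^ m₂ * 0 ^ m₃ * 0 ^ m₄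
        + ((6 + s) / 2) ^ (m₂ + m₃) * 0 ^ m₁ * 0 ^ m₄ * 0 ^ m₅
        + ((6 + s) / 2) ^ (m₂ + m₄) * 0 ^ m₁ * 0 ^ m₃ * 0 ^ m₅
        + ((6 + s) / 2) ^ (m₂ + m₅) * 0 ^ m₁ * 0 ^ m₃ * 0 ^ m₄
        + ((6 + s) / 2) ^ (m₃ + m₄) * 0 ^ m₁ * 0 ^ m₂ * 0 ^ m₅
        + ((6 + s) / 2) ^ (m₃ + m₅) * 0 ^ m₁ * 0 ^ m₂ * 0 ^ m₄
        + ((6 + s) / 2) ^ (m₄ + m₅) * 0 ^ m₁ * 0 ^ m₂ * 0 ^ m₃))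
    = evenMoment m₀ * evenMoment m₁ * evenMoment m₂ * evenMoment m₃ * evenMoment m₄
      * evenMoment m₅ := by
  have e0 : evenMoment 0 = 1 := by simp [evenMoment]
  have e1 : evenMoment 1 = 1 / 2 := by simp [evenMoment]
  have e2 : evenMoment 2 = 3 / 4 := by norm_num [evenMoment, Nat.doubleFactorial]
  have e3 : evenMoment 3 = 15 / 8 := by norm_num [evenMoment, Nat.doubleFactorial]
  have hs3 : s ^ 3 = 6 * s := by linear_combination s * hs
  have hs4 : s ^ 4 = 36 := by linear_combination (s ^ 2 + 6) * hs
  have b0 : m₀ ≤ 3 := by omega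
  have b1 : m₁ ≤ 3 - m₀ := by omega
  have b2 : m₂ ≤ 3 - m₀ - m₁ := by omega
  have b3 : m₃ ≤ 3 - m₀ - m₁ - m₂ := by omega
  have b4 : m₄ ≤ 3 - m₀ - m₁ - m₂ - m₃ := by omega
  have b5 : m₅ ≤ 3 - m₀ - m₁ - m₂ - m₃ - m₄ := by omega
  clear hm
  interval_cases m₀ <;> interval_cases m₁ <;> interval_cases m₂ <;> interval_cases m₃ <;>
    interval_cases m₄ <;> interval_cases m₅ <;>
  (simp only [e0, e1, e2, e3, pow_zero, ne_eq, OfNat.ofNat_ne_zero, one_ne_zero, not_false_eq_true,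
    zero_pow, mul_zero, mul_one, zero_mul, one_mul, add_zero, zero_add]
   ring_nf
   try simp only [hs, hs3, hs4]
   try ring)

/-- The rule integrates every monomial of degree at most 7 exactly. If some exponents are odd and
some even, all orbit sums vanish. If all exponents are odd, the monomial is `x₀ ⋯ x₅`, and the
contributions of the two orbits on which it does not vanish cancel. -/
theorem orbitSum_monomial (a b c e f g h i W0 W1 W2 : ℝ)
    (hg : g = Real.sqrt ((4 - Real.sqrt 6) * 2))
    (hc : c = Real.sqrt ((4 - Real.sqrt 6) / 2))
    (hf : f = Real.sqrt ((4 - Real.sqrt 6) * 3 / 2))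
    (ha : a = Real.sqrt ((4 - Real.sqrt 6) / 8))
    (hb : b = Real.sqrt ((4 - Real.sqrt 6) * 3 / 8))
    (he : e = Real.sqrt ((6 + Real.sqrt 6) / 8))
    (hh : h = Real.sqrt ((6 + Real.sqrt 6) * 3 / 8))
    (hi : i = Real.sqrt ((6 + Real.sqrt 6) / 2))
    (hW0 : W0 = (16 - Real.sqrt 6) * Real.pi ^ 3 / 100)
    (hW1 : W1 = (68 + 27 * Real.sqrt 6) * Real.pi ^ 3 / 9000)
    (hW2 : W2 = (54 - 19 * Real.sqrt 6) * Real.pi ^ 3 / 9000)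
    (k : Fin 6 → ℕ) (hk : ∑ j, k j ≤ 7) :
    orbitSum a b c e f g h i W0 W1 W2 (fun j x => x ^ k j)
      = ∏ j, ∫ x : ℝ, Real.exp (-x ^ 2) * x ^ k j := by
  have hs : Real.sqrt 6 ^ 2 = 6 := Real.sq_sqrt (by norm_num)
  have hs0 : 0 ≤ Real.sqrt 6 := Real.sqrt_nonneg 6
  have hu : 0 ≤ 4 - Real.sqrt 6 := by nlinarith
  by_cases hodd : ∃ j, Odd (k j)
  · obtain ⟨j, hj⟩ := hodd
    have hR : ∏ j, ∫ x : ℝ, Real.exp (-x ^ 2) * x ^ k j = 0 :=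
      Finset.prod_eq_zero (Finset.mem_univ j) (integral_gaussian_pow_odd hj)
    -- Every summand except the products of odd parts has a factor that vanishes for odd `k j`.
    have hz : (0 : ℝ) ^ k j = 0 := zero_pow hj.pos.ne'
    have hE : ∀ x : ℝ, x ^ k j + (-x) ^ k j = 0 := fun x => by rw [hj.neg_pow]; ring
    rw [hR, orbitSum]
    -- The products of odd parts over the two orbits with all coordinates nonzero cancel.
    have hO : W1 * ∏ j, ((if j = 0 then a else b) ^ k j - (-(if j = 0 then a else b)) ^ k j)
        = W2 * ∏ j, ((if j = 0 then h else e) ^ k j - (-(if j = 0 then h else e)) ^ k j) := by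
      by_cases heven : ∃ l, Even (k l)
      · obtain ⟨l, hl⟩ := heven
        rw [Finset.prod_eq_zero (Finset.mem_univ l) (by rw [hl.neg_pow, sub_self]),
          Finset.prod_eq_zero (Finset.mem_univ l) (by rw [hl.neg_pow, sub_self])]
        ring
      · have hall : ∀ l, Odd (k l) := by simpa using heven
        have hone : ∀ l, k l = 1 := by
          rw [Fin.sum_univ_six] at hk
          obtain ⟨d0, h0⟩ := hall 0
          obtain ⟨d1, h1⟩ := hall 1
          obtain ⟨d2, h2⟩ := hall 2
          obtain ⟨d3, h3⟩ := hall 3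
          obtain ⟨d4, h4⟩ := hall 4
          obtain ⟨d5, h5⟩ := hall 5
          intro l
          fin_cases l <;> simp only [Fin.zero_eta, Fin.mk_one, Fin.reduceFinMk] <;> omega
        -- With `b = √3 a` and `h = √3 e`, the identity `W₁ a b⁵ = W₂ h e⁵` involves only `a²`, `e²`.
        have hb' : b = Real.sqrt 3 * a := by
          rw [hb, ha, ← Real.sqrt_mul (by norm_num)]; congr 1; ring
        have hh' : h = Real.sqrt 3 * e := by
          rw [hh, he, ← Real.sqrt_mul (by norm_num)]; congr 1; ring
        have ha2 : a ^ 2 = (4 - Real.sqrt 6) / 8 := by rw [ha]; exact Real.sq_sqrt (by linarith)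
        have he2 : e ^ 2 = (6 + Real.sqrt 6) / 8 := by rw [he]; exact Real.sq_sqrt (by linarith)
        have h3 : Real.sqrt 3 ^ 4 = 9 := by
          rw [show (4 : ℕ) = 2 * 2 from rfl, pow_mul, Real.sq_sqrt (by norm_num)]; norm_num
        have key : W1 * (9 * (a ^ 2) ^ 3) = W2 * (e ^ 2) ^ 3 := by
          rw [ha2, he2, hW1, hW2]
          have hs3 : Real.sqrt 6 ^ 3 = 6 * Real.sqrt 6 := by linear_combination Real.sqrt 6 * hs
          have hs4 : Real.sqrt 6 ^ 4 = 36 := by linear_combination (Real.sqrt 6 ^ 2 + 6) * hs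
          ring_nf
          simp only [hs, hs3, hs4]
          ring
        simp [Fin.prod_univ_six, hone]
        rw [hb', hh']
        linear_combination (64 * Real.sqrt 3) * key
          + 64 * Real.sqrt 3 * W1 * a ^ 6 * h3
    simp only [Fin.prod_univ_six, Fin.reduceEq, if_true, if_false, one_ne_zero] at hO
    have hrest : ∀ A B : ℝ, A = B → A / 2 - B / 2 = 0 := by intro A B hAB; rw [hAB]; ring
    refine Eq.trans ?_ (hrest _ _ hO)
    fin_cases j <;> simp only [Fin.zero_eta, Fin.mk_one, Fin.reduceFinMk] at hz hE <;>
      simp only [hz, hE] <;> ring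
  · have hall : ∀ l, Even (k l) := by simpa using hodd
    choose m hm using fun l => even_iff_exists_two_mul.mp (hall l)
    obtain rfl : k = fun l => 2 * m l := funext hm
    have hE : ∀ (x : ℝ) (n : ℕ), x ^ (2 * n) + (-x) ^ (2 * n) = 2 * (x ^ 2) ^ n := by
      intro x n; rw [pow_mul, pow_mul, neg_sq]; ring
    have hO : ∀ (x : ℝ) (n : ℕ), x ^ (2 * n) - (-x) ^ (2 * n) = 0 := by
      intro x n; rw [pow_mul, pow_mul, neg_sq]; ring
    have hz : ∀ n : ℕ, (0 : ℝ) ^ (2 * n) = 0 ^ n := by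
      intro n; rw [pow_mul, zero_pow two_ne_zero]
    have hpi : Real.sqrt Real.pi ^ 6 = Real.pi ^ 3 := by
      rw [show (6 : ℕ) = 2 * 3 from rfl, pow_mul, Real.sq_sqrt Real.pi_pos.le]
    have hm3 : m 0 + m 1 + m 2 + m 3 + m 4 + m 5 ≤ 3 := by
      rw [Fin.sum_univ_six] at hk; omega
    have main := even_moment_equations (Real.sqrt 6) hs (m 0) (m 1) (m 2) (m 3) (m 4) (m 5) hm3
    simp only [orbitSum, integral_gaussian_pow_even, Fin.prod_univ_six, hE, hO, hz]
    rw [hg, hc, hf, ha, hb, he, hh, hi, hW0, hW1, hW2]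
    rw [Real.sq_sqrt (by linarith), Real.sq_sqrt (by linarith), Real.sq_sqrt (by linarith),
      Real.sq_sqrt (by linarith), Real.sq_sqrt (by linarith), Real.sq_sqrt (by linarith),
      Real.sq_sqrt (by linarith), Real.sq_sqrt (by linarith)]
    -- The bases are made opaque so that `ring` collects their powers instead of expanding them.
    generalize (4 - Real.sqrt 6) * 2 = t1 at *
    generalize (4 - Real.sqrt 6) / 2 = t2 at *
    generalize (4 - Real.sqrt 6) * 3 / 2 = t3 at *
    generalize (4 - Real.sqrt 6) / 8 = t4 at *
    generalize (4 - Real.sqrt 6) * 3 / 8 = t5 at *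
    generalize (6 + Real.sqrt 6) / 8 = t6 at *
    generalize (6 + Real.sqrt 6) * 3 / 8 = t7 at *
    generalize (6 + Real.sqrt 6) / 2 = t8 at *
    -- The powers `0 ^ n` are made opaque as well: no property of them is needed.
    generalize hZ : (fun n : ℕ => (0 : ℝ) ^ n) = Z
    have hZ' : ∀ n : ℕ, (0 : ℝ) ^ n = Z n := fun n => congrFun hZ n
    simp only [hZ'] at main ⊢
    linear_combination Real.pi ^ 3 * main - evenMoment (m 0) * evenMoment (m 1) * evenMoment (m 2)
      * evenMoment (m 3) * evenMoment (m 4) * evenMoment (m 5) * hpi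

/-- 127 point rule of degree 7 for `E_6^{r²}`. -/
theorem stmt_17 (a b c e f g h i W0 W1 W2 : ℝ)
    (hg : g = Real.sqrt ((4 - Real.sqrt 6) * 2))
    (hc : c = Real.sqrt ((4 - Real.sqrt 6) / 2))
    (hf : f = Real.sqrt ((4 - Real.sqrt 6) * 3 / 2))
    (ha : a = Real.sqrt ((4 - Real.sqrt 6) / 8))
    (hb : b = Real.sqrt ((4 - Real.sqrt 6) * 3 / 8))
    (he : e = Real.sqrt ((6 + Real.sqrt 6) / 8))
    (hh : h = Real.sqrt ((6 + Real.sqrt 6) * 3 / 8))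
    (hi : i = Real.sqrt ((6 + Real.sqrt 6) / 2))
    (hW0 : W0 = (16 - Real.sqrt 6) * Real.pi ^ 3 / 100)
    (hW1 : W1 = (68 + 27 * Real.sqrt 6) * Real.pi ^ 3 / 9000)
    (hW2 : W2 = (54 - 19 * Real.sqrt 6) * Real.pi ^ 3 / 9000)
    :
    ∀ q : MvPolynomial (Fin 6) ℝ, q.totalDegree ≤ 7 →
      W0 * (MvPolynomial.eval ![0, 0, 0, 0, 0, 0] q)
        + W1 * (MvPolynomial.eval ![g, 0, 0, 0, 0, 0] q
          + MvPolynomial.eval ![-g, 0, 0, 0, 0, 0] q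
          + MvPolynomial.eval ![c, f, 0, 0, 0, 0] q
          + MvPolynomial.eval ![c, -f, 0, 0, 0, 0] q
          + MvPolynomial.eval ![c, 0, f, 0, 0, 0] q
          + MvPolynomial.eval ![c, 0, -f, 0, 0, 0] q
          + MvPolynomial.eval ![c, 0, 0, f, 0, 0] q
          + MvPolynomial.eval ![c, 0, 0, -f, 0, 0] q
          + MvPolynomial.eval ![c, 0, 0, 0, f, 0] q
          + MvPolynomial.eval ![c, 0, 0, 0, -f, 0] q
          + MvPolynomial.eval ![c, 0, 0, 0, 0, f] q
          + MvPolynomial.eval ![c, 0, 0, 0, 0, -f] q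
          + MvPolynomial.eval ![-c, f, 0, 0, 0, 0] q
          + MvPolynomial.eval ![-c, -f, 0, 0, 0, 0] q
          + MvPolynomial.eval ![-c, 0, f, 0, 0, 0] q
          + MvPolynomial.eval ![-c, 0, -f, 0, 0, 0] q
          + MvPolynomial.eval ![-c, 0, 0, f, 0, 0] q
          + MvPolynomial.eval ![-c, 0, 0, -f, 0, 0] q
          + MvPolynomial.eval ![-c, 0, 0, 0, f, 0] q
          + MvPolynomial.eval ![-c, 0, 0, 0, -f, 0] q
          + MvPolynomial.eval ![-c, 0, 0, 0, 0, f] q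
          + MvPolynomial.eval ![-c, 0, 0, 0, 0, -f] q
          + MvPolynomial.eval ![a, b, b, b, b, b] q
          + MvPolynomial.eval ![-a, -b, -b, -b, -b, -b] q
          + MvPolynomial.eval ![a, -b, -b, b, b, b] q
          + MvPolynomial.eval ![-a, b, b, -b, -b, -b] q
          + MvPolynomial.eval ![a, -b, b, -b, b, b] q
          + MvPolynomial.eval ![-a, b, -b, b, -b, -b] q
          + MvPolynomial.eval ![a, -b, b, b, -b, b] q
          + MvPolynomial.eval ![-a, b, -b, -b, b, -b] q
          + MvPolynomial.eval ![a, -b, b, b, b, -b] q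
          + MvPolynomial.eval ![-a, b, -b, -b, -b, b] q
          + MvPolynomial.eval ![a, b, -b, -b, b, b] q
          + MvPolynomial.eval ![-a, -b, b, b, -b, -b] q
          + MvPolynomial.eval ![a, b, -b, b, -b, b] q
          + MvPolynomial.eval ![-a, -b, b, -b, b, -b] q
          + MvPolynomial.eval ![a, b, -b, b, b, -b] q
          + MvPolynomial.eval ![-a, -b, b, -b, -b, b] q
          + MvPolynomial.eval ![a, b, b, -b, -b, b] q
          + MvPolynomial.eval ![-a, -b, -b, b, b, -b] q
          + MvPolynomial.eval ![a, b, b, -b, b, -b] q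
          + MvPolynomial.eval ![-a, -b, -b, b, -b, b] q
          + MvPolynomial.eval ![a, b, b, b, -b, -b] q
          + MvPolynomial.eval ![-a, -b, -b, -b, b, b] q
          + MvPolynomial.eval ![a, -b, -b, -b, -b, b] q
          + MvPolynomial.eval ![-a, b, b, b, b, -b] q
          + MvPolynomial.eval ![a, -b, -b, -b, b, -b] q
          + MvPolynomial.eval ![-a, b, b, b, -b, b] q
          + MvPolynomial.eval ![a, -b, -b, b, -b, -b] q
          + MvPolynomial.eval ![-a, b, b, -b, b, b] q
          + MvPolynomial.eval ![a, -b, b, -b, -b, -b] q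
          + MvPolynomial.eval ![-a, b, -b, b, b, b] q
          + MvPolynomial.eval ![a, b, -b, -b, -b, -b] q
          + MvPolynomial.eval ![-a, -b, b, b, b, b] q)
        + W2 * (MvPolynomial.eval ![h, -e, e, e, e, e] q
          + MvPolynomial.eval ![-h, e, -e, -e, -e, -e] q
          + MvPolynomial.eval ![h, e, -e, e, e, e] q
          + MvPolynomial.eval ![-h, -e, e, -e, -e, -e] q
          + MvPolynomial.eval ![h, e, e, -e, e, e] q
          + MvPolynomial.eval ![-h, -e, -e, e, -e, -e] q
          + MvPolynomial.eval ![h, e, e, e, -e, e] q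
          + MvPolynomial.eval ![-h, -e, -e, -e, e, -e] q
          + MvPolynomial.eval ![h, e, e, e, e, -e] q
          + MvPolynomial.eval ![-h, -e, -e, -e, -e, e] q
          + MvPolynomial.eval ![h, -e, -e, -e, e, e] q
          + MvPolynomial.eval ![-h, e, e, e, -e, -e] q
          + MvPolynomial.eval ![h, -e, -e, e, -e, e] q
          + MvPolynomial.eval ![-h, e, e, -e, e, -e] q
          + MvPolynomial.eval ![h, -e, -e, e, e, -e] q
          + MvPolynomial.eval ![-h, e, e, -e, -e, e] q
          + MvPolynomial.eval ![h, -e, e, -e, -e, e] q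
          + MvPolynomial.eval ![-h, e, -e, e, e, -e] q
          + MvPolynomial.eval ![h, -e, e, -e, e, -e] q
          + MvPolynomial.eval ![-h, e, -e, e, -e, e] q
          + MvPolynomial.eval ![h, -e, e, e, -e, -e] q
          + MvPolynomial.eval ![-h, e, -e, -e, e, e] q
          + MvPolynomial.eval ![h, e, -e, -e, -e, e] q
          + MvPolynomial.eval ![-h, -e, e, e, e, -e] q
          + MvPolynomial.eval ![h, e, -e, -e, e, -e] q
          + MvPolynomial.eval ![-h, -e, e, e, -e, e] q
          + MvPolynomial.eval ![h, e, -e, e, -e, -e] q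
          + MvPolynomial.eval ![-h, -e, e, -e, e, e] q
          + MvPolynomial.eval ![h, e, e, -e, -e, -e] q
          + MvPolynomial.eval ![-h, -e, -e, e, e, e] q
          + MvPolynomial.eval ![h, -e, -e, -e, -e, -e] q
          + MvPolynomial.eval ![-h, e, e, e, e, e] q
          + MvPolynomial.eval ![0, i, i, 0, 0, 0] q
          + MvPolynomial.eval ![0, i, -i, 0, 0, 0] q
          + MvPolynomial.eval ![0, -i, i, 0, 0, 0] q
          + MvPolynomial.eval ![0, -i, -i, 0, 0, 0] q
          + MvPolynomial.eval ![0, i, 0, i, 0, 0] q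
          + MvPolynomial.eval ![0, i, 0, -i, 0, 0] q
          + MvPolynomial.eval ![0, -i, 0, i, 0, 0] q
          + MvPolynomial.eval ![0, -i, 0, -i, 0, 0] q
          + MvPolynomial.eval ![0, i, 0, 0, i, 0] q
          + MvPolynomial.eval ![0, i, 0, 0, -i, 0] q
          + MvPolynomial.eval ![0, -i, 0, 0, i, 0] q
          + MvPolynomial.eval ![0, -i, 0, 0, -i, 0] q
          + MvPolynomial.eval ![0, i, 0, 0, 0, i] q
          + MvPolynomial.eval ![0, i, 0, 0, 0, -i] q
          + MvPolynomial.eval ![0, -i, 0, 0, 0, i] q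
          + MvPolynomial.eval ![0, -i, 0, 0, 0, -i] q
          + MvPolynomial.eval ![0, 0, i, i, 0, 0] q
          + MvPolynomial.eval ![0, 0, i, -i, 0, 0] q
          + MvPolynomial.eval ![0, 0, -i, i, 0, 0] q
          + MvPolynomial.eval ![0, 0, -i, -i, 0, 0] q
          + MvPolynomial.eval ![0, 0, i, 0, i, 0] q
          + MvPolynomial.eval ![0, 0, i, 0, -i, 0] q
          + MvPolynomial.eval ![0, 0, -i, 0, i, 0] q
          + MvPolynomial.eval ![0, 0, -i, 0, -i, 0] q
          + MvPolynomial.eval ![0, 0, i, 0, 0, i] q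
          + MvPolynomial.eval ![0, 0, i, 0, 0, -i] q
          + MvPolynomial.eval ![0, 0, -i, 0, 0, i] q
          + MvPolynomial.eval ![0, 0, -i, 0, 0, -i] q
          + MvPolynomial.eval ![0, 0, 0, i, i, 0] q
          + MvPolynomial.eval ![0, 0, 0, i, -i, 0] q
          + MvPolynomial.eval ![0, 0, 0, -i, i, 0] q
          + MvPolynomial.eval ![0, 0, 0, -i, -i, 0] q
          + MvPolynomial.eval ![0, 0, 0, i, 0, i] q
          + MvPolynomial.eval ![0, 0, 0, i, 0, -i] q
          + MvPolynomial.eval ![0, 0, 0, -i, 0, i] q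
          + MvPolynomial.eval ![0, 0, 0, -i, 0, -i] q
          + MvPolynomial.eval ![0, 0, 0, 0, i, i] q
          + MvPolynomial.eval ![0, 0, 0, 0, i, -i] q
          + MvPolynomial.eval ![0, 0, 0, 0, -i, i] q
          + MvPolynomial.eval ![0, 0, 0, 0, -i, -i] q)
        = ∫ x : Fin 6 → ℝ, Real.exp (-(∑ t, x t ^ 2)) * MvPolynomial.eval x q := by
  refine eq_integral_of_monomials _ ?_ ?_ ?_
  · intro p q
    simp only [map_add]
    ring
  · intro r q
    simp only [map_mul, MvPolynomial.eval_C]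
    ring
  · intro k hk
    rw [← orbitSum_monomial a b c e f g h i W0 W1 W2 hg hc hf ha hb he hh hi hW0 hW1 hW2 k hk]
    generalize hF : (fun (j : Fin 6) (x : ℝ) => x ^ k j) = F
    have hev : ∀ x : Fin 6 → ℝ, MvPolynomial.eval x (MvPolynomial.monomial k 1)
        = F 0 (x 0) * F 1 (x 1) * F 2 (x 2) * F 3 (x 3) * F 4 (x 4) * F 5 (x 5) := by
      intro x
      rw [MvPolynomial.eval_monomial, one_mul, Finsupp.prod_fintype _ _ (fun _ => pow_zero _),
        Fin.prod_univ_six, ← hF]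
    simp only [hev, orbitSum, Matrix.cons_val]
    ring
end

section
/- Set m = √(3(9−4√3)/2), c = √((9−4√3)/6), k = √(4(9−4√3)/3), f = √((9−4√3)/3), i = √(9−4√3), a = √((9−4√3)/12), e = √((9−4√3)/4), j = √((√3+6)/3), p = √(2(√3+6)/3), b = √((√3+6)/24), g = √((√3+6)/8), h = √((√3+6)/6), o = √((√3+6)/2), l = √(3(√3+6)/8), and weights W₀ = (144−35√3)π^{7/2}/1089, W₁ = (675+388√3)π^{7/2}/95832, W₂ = (90−37√3)π^{7/2}/23958. Consider the 183 nodes in ℝ⁷: the origin with weight W₀; with weight W₁ the 56 points ±v for v equal to (−m,0,0,0,0,0,0) [2 points], (−c,k,0,0,0,0,0) [2], points with first two coordinates (−c,−f) and ±i in exactly one of the last five coordinates [20], and points with first two coordinates (−c,a) followed by a coordinate permutation over the last five coordinates of (e,e,e,e,e) [2], of (e,e,e,−e,−e) [20], or of (e,−e,−e,−e,−e) [10]; with weight W₂ the 126 points: ±v for v equal to (j,p,0,0,0,0,0) [2], points with first two coordinates (j,b) followed by a permutation over the last five coordinates of (g,g,g,g,g) [2], of (g,g,g,−g,−g) [20],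 or of (g,−g,−g,−g,−g) [10], points with first two coordinates (j,−h) and ±o in exactly one of the last five coordinates [20], points with first two coordinates (0,l) followed by a permutation over the last five coordinates of (g,g,g,g,−g) [10], of (g,g,−g,−g,−g) [20], or of (−g,−g,−g,−g,−g) [2], together with the 40 points with first two coordinates (0,0) having ±o in exactly two of the last five coordinates (signs independent) and zeros elsewhere. Then Σ W_i p(x_i) = ∫_{ℝ⁷} e^{−‖x‖²} p(x) dx for every real polynomial p in 7 variables of total degree at most 7. -/
/-!
The rule is built from two orbits of the Weyl group of `E₇`. Put `D = diag(1/√6, 1/√12, 1/2, …, 1/2)`,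
`s = √(9 - 4√3)` and `u = √((√3 + 6)/2)`. The 56 nodes of weight `W1` are `s • D z` with `z` in a list
`minuscule` of integer vectors (the minimal vectors of the dual lattice), and the 126 nodes of weight
`W2` are `u • D z` with `z` in a list `roots` of integer vectors (the root system).

By linearity it suffices to treat a monomial `x ^ α` with `|α| ≤ 7`. Its Gaussian integral is
`π ^ (7/2) * D ^ α * G α` with an integer `G α` (`integral_monomial`). Writing `S α` and `T α` for the
sums of `z ^ α` over the two lists, the rule takes the value
`D ^ α * (W1 * s ^ |α| * S α + W2 * u ^ |α| * T α)`, plus `W0` when `α = 0`. Exactness thus reduces to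
the following integer facts (`momentRelation_of_degree_le`):

* `|α| = 0`: `S = 56`, `T = 126`, `G = 1`;
* `|α| = 2`: `S = 24 G`, `T = 72 G`;
* `|α| = 4`: `S = 8 G`, `T = 32 G` (as for degree two, each orbit is a spherical 5-design);
* `|α| = 6`: `2 S + T = 16 G` (only this combination of the orbits integrates degree six);
* `|α|` odd: all three vanish.

The weights are exactly those that turn these relations into the claim, e.g. `W1 * s ^ 6 = π ^ (7/2) / 8`
and `W2 * u ^ 6 = π ^ (7/2) / 16`. The integer facts are checked by kernel evaluation over all `α`, after
the sums over the orbits have been put in closed form (`moment_minuscule`, `moment_roots`).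
-/

open MeasureTheory

namespace E7Rule

/-! ### The two integer point sets -/

/-- Integer vectors of length seven, as nested pairs so that the kernel evaluates coordinates quickly. -/
abbrev Pt := ℤ × ℤ × ℤ × ℤ × ℤ × ℤ × ℤ

/-- The ten points starting with `(x, y)` that have `±2` in exactly one of the last five coordinates. -/
def axes (x y : ℤ) : List Pt :=
  [2, -2].flatMap fun s : ℤ => [(x, y, s, 0, 0, 0, 0), (x, y, 0, s, 0, 0, 0), (x, y, 0, 0, s, 0, 0),
    (x, y, 0, 0, 0, s, 0), (x, y, 0, 0, 0, 0, s)]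

/-- The sixteen points starting with `(x, y)` whose last five coordinates are signs with product `σ`
(for `σ = ±1`): the weights of a half-spin representation of `D₅`. -/
def spin (x y σ : ℤ) : List Pt :=
  [1, -1].flatMap fun s : ℤ => [1, -1].flatMap fun t : ℤ => [1, -1].flatMap fun u : ℤ =>
    [1, -1].map fun v : ℤ => (x, y, s, t, u, v, σ * s * t * u * v)

/-- The forty points `±2 e_r ± 2 e_t` with `r < t` among the last five coordinates: the roots of `D₅`. -/
def pairs : List Pt :=
  [2, -2].flatMap fun s : ℤ => [2, -2].flatMap fun t : ℤ =>
    [(0, 0, s, t, 0, 0, 0), (0, 0, s, 0, t, 0, 0), (0, 0, s, 0, 0, t, 0), (0, 0, s, 0, 0, 0, t),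
     (0, 0, 0, s, t, 0, 0), (0, 0, 0, s, 0, t, 0), (0, 0, 0, s, 0, 0, t),
     (0, 0, 0, 0, s, t, 0), (0, 0, 0, 0, s, 0, t), (0, 0, 0, 0, 0, s, t)]

/-- The 56 minimal vectors of the dual of the `E₇` lattice, in coordinates rescaled to be integers. -/
def minuscule : List Pt :=
  [(-3, 0, 0, 0, 0, 0, 0), (3, 0, 0, 0, 0, 0, 0), (-1, 4, 0, 0, 0, 0, 0), (1, -4, 0, 0, 0, 0, 0)]
    ++ axes (-1) (-2) ++ axes 1 2 ++ spin (-1) 1 1 ++ spin 1 (-1) (-1)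

/-- The 126 roots of `E₇`, in coordinates rescaled to be integers. -/
def roots : List Pt :=
  [(2, 4, 0, 0, 0, 0, 0), (-2, -4, 0, 0, 0, 0, 0)] ++ spin 2 1 1 ++ spin (-2) (-1) (-1)
    ++ axes 2 (-2) ++ axes (-2) 2 ++ spin 0 3 (-1) ++ spin 0 (-3) 1 ++ pairs

/-! ### Moments of the point sets in closed form -/

/-- The monomial with exponents `a, …, g` evaluated at `z`. -/
def mon (a b c d e f g : ℕ) (z : Pt) : ℤ :=
  z.1 ^ a * z.2.1 ^ b * z.2.2.1 ^ c * z.2.2.2.1 ^ d * z.2.2.2.2.1 ^ e * z.2.2.2.2.2.1 ^ f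
    * z.2.2.2.2.2.2 ^ g

/-- The sum of a monomial over a list of points. -/
def moment (l : List Pt) (a b c d e f g : ℕ) : ℤ := (l.map (mon a b c d e f g)).sum

/-- `r ^ n + (-r) ^ n`, in a form that evaluates quickly. -/
def alt (r n : ℕ) : ℤ := if n % 2 = 0 then 2 * (r ^ n : ℕ) else 0

/-- `0 ^ n`, in a form that evaluates quickly. -/
def zeroPow (n : ℕ) : ℤ := if n = 0 then 1 else 0

lemma alt_eq (r n : ℕ) : alt r n = (r : ℤ) ^ n + (-r : ℤ) ^ n := by
  unfold alt
  split_ifs with h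
  · rw [(Nat.even_iff.2 h).neg_pow]; push_cast; ring
  · rw [(Nat.not_even_iff_odd.1 (fun h' => h (Nat.even_iff.1 h'))).neg_pow]; ring

lemma zeroPow_eq (n : ℕ) : zeroPow n = 0 ^ n := by
  simp [zeroPow, zero_pow_eq]

/-- Moments of `axes`, without the factor from the first two coordinates. -/
def axesMoment (c d e f g : ℕ) : ℤ :=
  alt 2 c * zeroPow (d + e + f + g) + alt 2 d * zeroPow (c + e + f + g)
    + alt 2 e * zeroPow (c + d + f + g) + alt 2 f * zeroPow (c + d + e + g)
    + alt 2 g * zeroPow (c + d + e + f)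

/-- Moments of `pairs`, without the factor from the first two coordinates. -/
def pairsMoment (c d e f g : ℕ) : ℤ :=
  alt 2 c * alt 2 d * zeroPow (e + f + g) + alt 2 c * alt 2 e * zeroPow (d + f + g)
    + alt 2 c * alt 2 f * zeroPow (d + e + g) + alt 2 c * alt 2 g * zeroPow (d + e + f)
    + alt 2 d * alt 2 e * zeroPow (c + f + g) + alt 2 d * alt 2 f * zeroPow (c + e + g)
    + alt 2 d * alt 2 g * zeroPow (c + e + f) + alt 2 e * alt 2 f * zeroPow (c + d + g)
    + alt 2 e * alt 2 g * zeroPow (c + d + f) + alt 2 f * alt 2 g * zeroPow (c + d + e)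

/-- Moments of `spin` for `σ = 1`, without the factor from the first two coordinates. -/
def spinMoment (c d e f g : ℕ) : ℤ :=
  alt 1 (c + g) * alt 1 (d + g) * alt 1 (e + g) * alt 1 (f + g)

/-- Closed form of the moments of `minuscule`. -/
def S (a b c d e f g : ℕ) : ℤ :=
  alt 3 a * zeroPow (b + c + d + e + f + g)
    + alt 1 (a + b) * (-1) ^ a * (4 ^ b * zeroPow (c + d + e + f + g))
    + alt 1 (a + b) * 2 ^ b * axesMoment c d e f g
    + alt 1 (a + b + g) * (-1) ^ a * spinMoment c d e f g

/-- Closed form of the moments of `roots`. -/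
def T (a b c d e f g : ℕ) : ℤ :=
  alt 1 (a + b) * 2 ^ a * (4 ^ b * zeroPow (c + d + e + f + g) + (-2) ^ b * axesMoment c d e f g)
    + alt 1 (a + b + g) * (2 ^ a + zeroPow a * 3 ^ b * (-1) ^ g) * spinMoment c d e f g
    + zeroPow (a + b) * pairsMoment c d e f g

lemma moment_append (l l' : List Pt) (a b c d e f g : ℕ) :
    moment (l ++ l') a b c d e f g = moment l a b c d e f g + moment l' a b c d e f g := by
  simp [moment]

lemma moment_axes (x y : ℤ) (a b c d e f g : ℕ) :
    moment (axes x y) a b c d e f g = x ^ a * y ^ b * axesMoment c d e f g := by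
  simp only [moment, axes, mon, axesMoment, alt_eq, zeroPow_eq, pow_add, List.flatMap_cons,
    List.flatMap_nil, List.map_cons, List.map_nil, List.cons_append, List.nil_append,
    List.append_nil, List.sum_cons, List.sum_nil]
  push_cast
  ring

lemma moment_spin (x y σ : ℤ) (a b c d e f g : ℕ) :
    moment (spin x y σ) a b c d e f g = x ^ a * y ^ b * σ ^ g * spinMoment c d e f g := by
  simp only [moment, spin, mon, spinMoment, alt_eq, pow_add, mul_pow, List.flatMap_cons,
    List.flatMap_nil, List.map_cons, List.map_nil, List.cons_append, List.nil_append,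
    List.append_nil, List.sum_cons, List.sum_nil]
  push_cast
  ring

lemma moment_pairs (a b c d e f g : ℕ) :
    moment pairs a b c d e f g = zeroPow (a + b) * pairsMoment c d e f g := by
  simp only [moment, pairs, mon, pairsMoment, alt_eq, zeroPow_eq, pow_add, List.flatMap_cons,
    List.flatMap_nil, List.map_cons, List.map_nil, List.cons_append, List.nil_append,
    List.append_nil, List.sum_cons, List.sum_nil]
  push_cast
  ring

lemma neg_one_pow_mul_self (n : ℕ) : ((-1 : ℤ) ^ n) * (-1) ^ n = 1 := by
  rw [← mul_pow]; simp

lemma moment_minuscule (a b c d e f g : ℕ) :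
    moment minuscule a b c d e f g = S a b c d e f g := by
  simp only [minuscule, moment_append, moment_axes, moment_spin, S]
  simp only [moment, mon, alt_eq, zeroPow_eq, pow_add, List.map_cons, List.map_nil, List.sum_cons,
    List.sum_nil]
  push_cast
  have ha := neg_one_pow_mul_self a
  rw [neg_pow 2 b, neg_pow 4 b, neg_pow 3 a]
  generalize spinMoment c d e f g = sp
  generalize axesMoment c d e f g = ax
  simp only [one_pow]
  linear_combination (-((-1) ^ b * (0 ^ c * 0 ^ d * 0 ^ e * 0 ^ f * 0 ^ g) * 4 ^ b)
    - (-1) ^ b * (-1) ^ g * sp) * ha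

lemma moment_roots (a b c d e f g : ℕ) :
    moment roots a b c d e f g = T a b c d e f g := by
  simp only [roots, moment_append, moment_axes, moment_spin, moment_pairs, T]
  simp only [moment, mon, alt_eq, zeroPow_eq, pow_add, List.map_cons, List.map_nil, List.sum_cons,
    List.sum_nil]
  push_cast
  have hb := neg_one_pow_mul_self b
  have hg := neg_one_pow_mul_self g
  rw [neg_pow 2 b, neg_pow 4 b, neg_pow 3 b, neg_pow 2 a]
  generalize spinMoment c d e f g = sp
  generalize axesMoment c d e f g = ax
  simp only [one_pow]
  have h0 : (-1 : ℤ) ^ a * 0 ^ a = 0 ^ a := by rw [← mul_pow]; simp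
  linear_combination (-((-1) ^ a * 2 ^ a * 2 ^ b * ax)) * hb
    - ((-1) ^ b * 3 ^ b * sp * ((-1) ^ a * 0 ^ a)) * hg - ((-1) ^ b * 3 ^ b * sp) * h0

/-! ### The integer identities behind exactness -/

/-- The `n`-th moment of `e ^ (-x²)` on the line, divided by `√π` and by `(2r) ^ (-n/2)`;
see `integral_pow`. -/
def gaussMoment (r n : ℕ) : ℤ :=
  if n % 2 = 0 then (Nat.doubleFactorial (n - 1) * r ^ (n / 2) : ℕ) else 0

/-- Seven-dimensional Gaussian moment, normalised to an integer; see `integral_monomial`. -/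
def G (a b c d e f g : ℕ) : ℤ :=
  gaussMoment 3 a * gaussMoment 6 b * gaussMoment 2 c * gaussMoment 2 d * gaussMoment 2 e
    * gaussMoment 2 f * gaussMoment 2 g

/-- The relation, in degree `n ≤ 7`, between a moment `S` of `minuscule`, the same moment `T` of
`roots` and the normalised Gaussian moment `G`. -/
def MomentRelation (S T G : ℤ) : ℕ → Prop
  | 0 => S = 56 ∧ T = 126 ∧ G = 1
  | 2 => S = 24 * G ∧ T = 72 * G
  | 4 => S = 8 * G ∧ T = 32 * G
  | 6 => 2 * S + T = 16 * G
  | _ => S = 0 ∧ T = 0 ∧ G = 0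

instance (S T G : ℤ) (n : ℕ) : Decidable (MomentRelation S T G n) := by
  unfold MomentRelation; split <;> infer_instance

set_option synthInstance.maxHeartbeats 400000 in
set_option synthInstance.maxSize 400 in
set_option maxRecDepth 100000 in
lemma momentRelation_closed : ∀ a < 8, ∀ b < 8 - a, ∀ c < 8 - a - b, ∀ d < 8 - a - b - c,
    ∀ e < 8 - a - b - c - d, ∀ f < 8 - a - b - c - d - e, ∀ g < 8 - a - b - c - d - e - f,
    MomentRelation (S a b c d e f g) (T a b c d e f g) (G a b c d e f g)
      (a + b + c + d + e + f + g) := by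
  decide +kernel

lemma momentRelation_of_degree_le (a b c d e f g : ℕ) (h : a + b + c + d + e + f + g ≤ 7) :
    MomentRelation (moment minuscule a b c d e f g) (moment roots a b c d e f g) (G a b c d e f g)
      (a + b + c + d + e + f + g) := by
  rw [moment_minuscule, moment_roots]
  exact momentRelation_closed a (by omega) b (by omega) c (by omega) d (by omega) e (by omega)
    f (by omega) g (by omega)

/-! ### Gaussian moments -/

lemma integrable_exp_mul_pow (n : ℕ) :
    Integrable (fun x : ℝ => Real.exp (-x ^ 2) * x ^ n) := by
  have h := integrable_rpow_mul_exp_neg_mul_sq (b := 1) one_pos (s := n)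
    (by have : (0 : ℝ) ≤ n := n.cast_nonneg
        linarith)
  simpa [mul_comm] using h

lemma integral_pow_even (k : ℕ) :
    ∫ x : ℝ, Real.exp (-x ^ 2) * x ^ (2 * k) =
      √Real.pi * (Nat.doubleFactorial (2 * k - 1) : ℝ) / 2 ^ k := by
  have h1 : ∫ x : ℝ, Real.exp (-x ^ 2) * x ^ (2 * k)
      = ∫ x : ℝ, (fun y : ℝ => Real.exp (-y ^ 2) * y ^ (2 * k)) |x| := by
    congr 1; ext x; simp [pow_mul]
  have h2 := integral_rpow_mul_exp_neg_mul_rpow (p := 2) (q := (2 * k : ℕ)) (b := 1) two_pos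
    (by have : (0 : ℝ) ≤ (2 * k : ℕ) := Nat.cast_nonneg _
        linarith) one_pos
  have h3 : (((2 * k : ℕ) : ℝ) + 1) / 2 = k + 1 / 2 := by push_cast; ring
  rw [h3, Real.Gamma_nat_add_half] at h2
  simp only [Real.rpow_natCast, Real.rpow_two, Real.one_rpow, neg_mul, one_mul] at h2
  rw [h1, integral_comp_abs (f := fun y : ℝ => Real.exp (-y ^ 2) * y ^ (2 * k))]
  simp_rw [mul_comm (Real.exp _)]
  rw [h2]
  ring

lemma integral_pow_odd (n : ℕ) (hn : Odd n) :
    ∫ x : ℝ, Real.exp (-x ^ 2) * x ^ n = 0 := by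
  have h := integral_neg_eq_self (fun x : ℝ => Real.exp (-x ^ 2) * x ^ n) volume
  simp only [neg_sq, hn.neg_pow, mul_neg, integral_neg] at h
  linarith

/-- One-dimensional Gaussian moments in terms of `gaussMoment`, for a scale `δ` with `δ² = 1/(2r)`. -/
lemma integral_pow (r n : ℕ) (δ : ℝ) (hδ : 2 * r * δ ^ 2 = 1) :
    ∫ x : ℝ, Real.exp (-x ^ 2) * x ^ n = √Real.pi * (δ ^ n * gaussMoment r n) := by
  rcases Nat.even_or_odd n with hn | hn
  · obtain ⟨k, rfl⟩ := hn.two_dvd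
    have hk : (2 : ℝ) ^ k * (r ^ k * δ ^ (2 * k)) = 1 := by
      rw [pow_mul, ← mul_pow, ← mul_pow, ← mul_assoc, hδ, one_pow]
    rw [integral_pow_even, gaussMoment, if_pos (by omega), Nat.mul_div_cancel_left _ two_pos]
    push_cast
    rw [div_eq_iff (by positivity)]
    linear_combination (-√Real.pi * (Nat.doubleFactorial (2 * k - 1) : ℝ)) * hk
  · rw [integral_pow_odd n hn, gaussMoment, if_neg (by have := Nat.odd_iff.1 hn; omega)]
    simp

lemma exp_mul_prod (x : Fin 7 → ℝ) (α : Fin 7 →₀ ℕ) :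
    Real.exp (-(∑ t, x t ^ 2)) * ∏ t, x t ^ α t = ∏ t, Real.exp (-(x t) ^ 2) * x t ^ α t := by
  rw [Finset.prod_mul_distrib, ← Real.exp_sum, Finset.sum_neg_distrib]

lemma integrable_monomial (α : Fin 7 →₀ ℕ) :
    Integrable (fun x : Fin 7 → ℝ => Real.exp (-(∑ t, x t ^ 2)) * ∏ t, x t ^ α t) := by
  simp_rw [exp_mul_prod]
  exact Integrable.fintype_prod (f := fun t (y : ℝ) => Real.exp (-y ^ 2) * y ^ α t)
    (fun t => integrable_exp_mul_pow (α t))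

/-- The scaling factor `D ^ α`, where `D = diag(x, y, z, z, z, z, z)`. -/
def scale (x y z : ℝ) (α : Fin 7 →₀ ℕ) : ℝ :=
  x ^ α 0 * y ^ α 1 * z ^ (α 2 + α 3 + α 4 + α 5 + α 6)

lemma integral_monomial (x y z : ℝ) (hx : 6 * x ^ 2 = 1) (hy : 12 * y ^ 2 = 1)
    (hz : 4 * z ^ 2 = 1) (α : Fin 7 →₀ ℕ) :
    ∫ v : Fin 7 → ℝ, Real.exp (-(∑ t, v t ^ 2)) * ∏ t, v t ^ α t =
      √Real.pi ^ 7 * scale x y z α * G (α 0) (α 1) (α 2) (α 3) (α 4) (α 5) (α 6) := by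
  simp_rw [exp_mul_prod]
  rw [integral_fintype_prod_volume_eq_prod (fun t (y : ℝ) => Real.exp (-y ^ 2) * y ^ α t),
    Fin.prod_univ_seven]
  have hz' : 2 * ((2 : ℕ) : ℝ) * z ^ 2 = 1 := by push_cast; linarith
  rw [integral_pow 3 _ x (by push_cast; linarith), integral_pow 6 _ y (by push_cast; linarith),
    integral_pow 2 _ z hz', integral_pow 2 _ z hz', integral_pow 2 _ z hz', integral_pow 2 _ z hz',
    integral_pow 2 _ z hz', scale, G]
  push_cast
  ring

/-! ### Exactness on polynomials -/

/-- The node `diag(x, y, z, z, z, z, z) • v`. -/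
def node (x y z : ℝ) (v : Pt) : Fin 7 → ℝ :=
  ![v.1 * x, v.2.1 * y, v.2.2.1 * z, v.2.2.2.1 * z, v.2.2.2.2.1 * z, v.2.2.2.2.2.1 * z,
    v.2.2.2.2.2.2 * z]

lemma sum_monomial_node (s x y z : ℝ) (l : List Pt) (α : Fin 7 →₀ ℕ) :
    (l.map fun v => ∏ t, node (s * x) (s * y) (s * z) v t ^ α t).sum =
      s ^ (α 0 + α 1 + α 2 + α 3 + α 4 + α 5 + α 6) * scale x y z α
        * moment l (α 0) (α 1) (α 2) (α 3) (α 4) (α 5) (α 6) := by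
  induction l with
  | nil => simp [moment]
  | cons v l ih =>
    rw [List.map_cons, List.sum_cons, ih, Fin.prod_univ_seven]
    simp only [moment, List.map_cons, List.sum_cons, mon, node, scale]
    push_cast
    simp
    ring

lemma sum_eval (l : List Pt) (ν : Pt → Fin 7 → ℝ) (q : MvPolynomial (Fin 7) ℝ) :
    (l.map fun v => MvPolynomial.eval (ν v) q).sum =
      ∑ α ∈ q.support, q.coeff α * (l.map fun v => ∏ t, ν v t ^ α t).sum := by
  induction l with
  | nil => simp
  | cons v l ih =>
    rw [List.map_cons, List.sum_cons, ih, MvPolynomial.eval_eq']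
    simp only [List.map_cons, List.sum_cons, mul_add, Finset.sum_add_distrib]

/-- Exactness on a single monomial of degree at most seven. The weights are written as multiples of
`√π ^ 7`, and `w = √3`. -/
lemma exact_monomial (s u w x y z : ℝ) (hw : w ^ 2 = 3) (hs : s ^ 2 = 9 - 4 * w)
    (hu : u ^ 2 = (w + 6) / 2) (hx : 6 * x ^ 2 = 1) (hy : 12 * y ^ 2 = 1) (hz : 4 * z ^ 2 = 1)
    (α : Fin 7 →₀ ℕ) (hα : α 0 + α 1 + α 2 + α 3 + α 4 + α 5 + α 6 ≤ 7) :
    (144 - 35 * w) * √Real.pi ^ 7 / 1089 * ∏ t, (0 : Fin 7 → ℝ) t ^ α t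
      + (675 + 388 * w) * √Real.pi ^ 7 / 95832
        * (minuscule.map fun v => ∏ t, node (s * x) (s * y) (s * z) v t ^ α t).sum
      + (90 - 37 * w) * √Real.pi ^ 7 / 23958
        * (roots.map fun v => ∏ t, node (u * x) (u * y) (u * z) v t ^ α t).sum
      = ∫ v : Fin 7 → ℝ, Real.exp (-(∑ t, v t ^ 2)) * ∏ t, v t ^ α t := by
  have h0 : ∏ t, (0 : Fin 7 → ℝ) t ^ α t
      = 0 ^ (α 0 + α 1 + α 2 + α 3 + α 4 + α 5 + α 6) * scale x y z α := by
    rcases Nat.eq_zero_or_pos (α 0 + α 1 + α 2 + α 3 + α 4 + α 5 + α 6) with h | h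
    · have : α 0 = 0 ∧ α 1 = 0 ∧ α 2 = 0 ∧ α 3 = 0 ∧ α 4 = 0 ∧ α 5 = 0 ∧ α 6 = 0 := by omega
      obtain ⟨h0, h1, h2, h3, h4, h5, h6⟩ := this
      simp [Fin.prod_univ_seven, scale, h0, h1, h2, h3, h4, h5, h6]
    · simp only [Fin.prod_univ_seven, Pi.zero_apply, ← pow_add]
      rw [zero_pow h.ne', zero_mul]
  rw [sum_monomial_node, sum_monomial_node, integral_monomial x y z hx hy hz, h0]
  have key := momentRelation_of_degree_le _ _ _ _ _ _ _ hα
  generalize moment minuscule _ _ _ _ _ _ _ = A at *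
  generalize moment roots _ _ _ _ _ _ _ = B at *
  generalize G _ _ _ _ _ _ _ = C at *
  generalize α 0 + α 1 + α 2 + α 3 + α 4 + α 5 + α 6 = n at *
  generalize scale x y z α = σ
  generalize √Real.pi ^ 7 = P
  -- The values of the weights times `s ^ (2k)` and `u ^ (2k)` for `k = 1, 2, 3`.
  have a1 : (675 + 388 * w) * s ^ 2 / 95832 = (43 + 24 * w) / 2904 := by
    rw [hs]; linear_combination (-1552 / 95832) * hw
  have a2 : (675 + 388 * w) * s ^ 4 / 95832 = (9 + 4 * w) / 264 := by
    linear_combination s ^ 2 * a1 + (43 + 24 * w) / 2904 * hs - 96 / 2904 * hw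
  have a3 : (675 + 388 * w) * s ^ 6 / 95832 = 1 / 8 := by
    linear_combination s ^ 2 * a2 + (9 + 4 * w) / 264 * hs - 16 / 264 * hw
  have b1 : (90 - 37 * w) * u ^ 2 / 23958 = (13 - 4 * w) / 1452 := by
    rw [hu]; linear_combination (-37 / 47916) * hw
  have b2 : (90 - 37 * w) * u ^ 4 / 23958 = (6 - w) / 264 := by
    linear_combination u ^ 2 * b1 + (13 - 4 * w) / 1452 * hu - 4 / 2904 * hw
  have b3 : (90 - 37 * w) * u ^ 6 / 23958 = 1 / 16 := by
    linear_combination u ^ 2 * b2 + (6 - w) / 264 * hu - 1 / 528 * hw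
  interval_cases n <;> simp only [MomentRelation] at key
  · obtain ⟨rfl, rfl, rfl⟩ := key
    push_cast; ring
  · obtain ⟨rfl, rfl, rfl⟩ := key
    simp
  · obtain ⟨rfl, rfl⟩ := key
    push_cast
    linear_combination (P * σ * 24 * C) * a1 + (P * σ * 72 * C) * b1
  · obtain ⟨rfl, rfl, rfl⟩ := key
    simp
  · obtain ⟨rfl, rfl⟩ := key
    push_cast
    linear_combination (P * σ * 8 * C) * a2 + (P * σ * 32 * C) * b2
  · obtain ⟨rfl, rfl, rfl⟩ := key
    simp
  · have key' : 2 * (A : ℝ) + B = 16 * C := by exact_mod_cast key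
    linear_combination (P * σ * A) * a3 + (P * σ * B) * b3 + P * σ / 16 * key'
  · obtain ⟨rfl, rfl, rfl⟩ := key
    simp

lemma exact_polynomial (s u w x y z : ℝ) (hw : w ^ 2 = 3) (hs : s ^ 2 = 9 - 4 * w)
    (hu : u ^ 2 = (w + 6) / 2) (hx : 6 * x ^ 2 = 1) (hy : 12 * y ^ 2 = 1) (hz : 4 * z ^ 2 = 1)
    (q : MvPolynomial (Fin 7) ℝ) (hq : q.totalDegree ≤ 7) :
    (144 - 35 * w) * √Real.pi ^ 7 / 1089 * MvPolynomial.eval 0 q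
      + (675 + 388 * w) * √Real.pi ^ 7 / 95832
        * (minuscule.map fun v => MvPolynomial.eval (node (s * x) (s * y) (s * z) v) q).sum
      + (90 - 37 * w) * √Real.pi ^ 7 / 23958
        * (roots.map fun v => MvPolynomial.eval (node (u * x) (u * y) (u * z) v) q).sum
      = ∫ v : Fin 7 → ℝ, Real.exp (-(∑ t, v t ^ 2)) * MvPolynomial.eval v q := by
  rw [sum_eval, sum_eval]
  have hint : ∫ v : Fin 7 → ℝ, Real.exp (-(∑ t, v t ^ 2)) * MvPolynomial.eval v q
      = ∑ α ∈ q.support, q.coeff α *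
        ∫ v : Fin 7 → ℝ, Real.exp (-(∑ t, v t ^ 2)) * ∏ t, v t ^ α t := by
    simp_rw [← integral_const_mul]
    rw [← integral_finsetSum _ (fun α _ => (integrable_monomial α).const_mul _)]
    congr 1
    ext v
    rw [MvPolynomial.eval_eq', Finset.mul_sum]
    exact Finset.sum_congr rfl fun α _ => by ring
  rw [hint, MvPolynomial.eval_eq', Finset.mul_sum, Finset.mul_sum, Finset.mul_sum,
    ← Finset.sum_add_distrib, ← Finset.sum_add_distrib]
  refine Finset.sum_congr rfl fun α hα => ?_
  have hdeg := (MvPolynomial.le_totalDegree hα).trans hq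
  rw [Finsupp.sum_fintype _ _ (fun _ => rfl), Fin.sum_univ_seven] at hdeg
  rw [← exact_monomial s u w x y z hw hs hu hx hy hz α hdeg]
  ring

lemma sqrt_mul_of_sq {r A B : ℝ} (hr : 0 ≤ r) (h : B = r ^ 2 * A) : √B = r * √A := by
  rw [h, Real.sqrt_mul (sq_nonneg r), Real.sqrt_sq hr]

end E7Rule

open E7Rule

/-- 183 point rule of degree 7 for `E_7^{r²}`. -/
theorem stmt_19 (m c k f i a e j p b g h o l W0 W1 W2 : ℝ)
    (hm : m = Real.sqrt ((9 - 4 * Real.sqrt 3) * 3 / 2))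
    (hc : c = Real.sqrt ((9 - 4 * Real.sqrt 3) / 6))
    (hk : k = Real.sqrt ((9 - 4 * Real.sqrt 3) * 4 / 3))
    (hf : f = Real.sqrt ((9 - 4 * Real.sqrt 3) / 3))
    (hi : i = Real.sqrt (9 - 4 * Real.sqrt 3))
    (ha : a = Real.sqrt ((9 - 4 * Real.sqrt 3) / 12))
    (he : e = Real.sqrt ((9 - 4 * Real.sqrt 3) / 4))
    (hj : j = Real.sqrt ((Real.sqrt 3 + 6) / 3))
    (hp : p = Real.sqrt ((Real.sqrt 3 + 6) * 2 / 3))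
    (hb : b = Real.sqrt ((Real.sqrt 3 + 6) / 24))
    (hg : g = Real.sqrt ((Real.sqrt 3 + 6) / 8))
    (hh : h = Real.sqrt ((Real.sqrt 3 + 6) / 6))
    (ho : o = Real.sqrt ((Real.sqrt 3 + 6) / 2))
    (hl : l = Real.sqrt ((Real.sqrt 3 + 6) * 3 / 8))
    (hW0 : W0 = (144 - 35 * Real.sqrt 3) * Real.pi ^ ((7 : ℝ) / 2) / 1089)
    (hW1 : W1 = (675 + 388 * Real.sqrt 3) * Real.pi ^ ((7 : ℝ) / 2) / 95832)
    (hW2 : W2 = (90 - 37 * Real.sqrt 3) * Real.pi ^ ((7 : ℝ) / 2) / 23958)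
    :
    ∀ q : MvPolynomial (Fin 7) ℝ, q.totalDegree ≤ 7 →
      W0 * (MvPolynomial.eval ![0, 0, 0, 0, 0, 0, 0] q)
        + W1 * (MvPolynomial.eval ![-m, 0, 0, 0, 0, 0, 0] q
          + MvPolynomial.eval ![m, 0, 0, 0, 0, 0, 0] q
          + MvPolynomial.eval ![-c, k, 0, 0, 0, 0, 0] q
          + MvPolynomial.eval ![c, -k, 0, 0, 0, 0, 0] q
          + MvPolynomial.eval ![-c, -f, i, 0, 0, 0, 0] q
          + MvPolynomial.eval ![c, f, -i, 0, 0, 0, 0] q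
          + MvPolynomial.eval ![-c, -f, -i, 0, 0, 0, 0] q
          + MvPolynomial.eval ![c, f, i, 0, 0, 0, 0] q
          + MvPolynomial.eval ![-c, -f, 0, i, 0, 0, 0] q
          + MvPolynomial.eval ![c, f, 0, -i, 0, 0, 0] q
          + MvPolynomial.eval ![-c, -f, 0, -i, 0, 0, 0] q
          + MvPolynomial.eval ![c, f, 0, i, 0, 0, 0] q
          + MvPolynomial.eval ![-c, -f, 0, 0, i, 0, 0] q
          + MvPolynomial.eval ![c, f, 0, 0, -i, 0, 0] q
          + MvPolynomial.eval ![-c, -f, 0, 0, -i, 0, 0] q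
          + MvPolynomial.eval ![c, f, 0, 0, i, 0, 0] q
          + MvPolynomial.eval ![-c, -f, 0, 0, 0, i, 0] q
          + MvPolynomial.eval ![c, f, 0, 0, 0, -i, 0] q
          + MvPolynomial.eval ![-c, -f, 0, 0, 0, -i, 0] q
          + MvPolynomial.eval ![c, f, 0, 0, 0, i, 0] q
          + MvPolynomial.eval ![-c, -f, 0, 0, 0, 0, i] q
          + MvPolynomial.eval ![c, f, 0, 0, 0, 0, -i] q
          + MvPolynomial.eval ![-c, -f, 0, 0, 0, 0, -i] q
          + MvPolynomial.eval ![c, f, 0, 0, 0, 0, i] q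
          + MvPolynomial.eval ![-c, a, e, e, e, e, e] q
          + MvPolynomial.eval ![c, -a, -e, -e, -e, -e, -e] q
          + MvPolynomial.eval ![-c, a, -e, -e, e, e, e] q
          + MvPolynomial.eval ![c, -a, e, e, -e, -e, -e] q
          + MvPolynomial.eval ![-c, a, -e, e, -e, e, e] q
          + MvPolynomial.eval ![c, -a, e, -e, e, -e, -e] q
          + MvPolynomial.eval ![-c, a, -e, e, e, -e, e] q
          + MvPolynomial.eval ![c, -a, e, -e, -e, e, -e] q
          + MvPolynomial.eval ![-c, a, -e, e, e, e, -e] q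
          + MvPolynomial.eval ![c, -a, e, -e, -e, -e, e] q
          + MvPolynomial.eval ![-c, a, e, -e, -e, e, e] q
          + MvPolynomial.eval ![c, -a, -e, e, e, -e, -e] q
          + MvPolynomial.eval ![-c, a, e, -e, e, -e, e] q
          + MvPolynomial.eval ![c, -a, -e, e, -e, e, -e] q
          + MvPolynomial.eval ![-c, a, e, -e, e, e, -e] q
          + MvPolynomial.eval ![c, -a, -e, e, -e, -e, e] q
          + MvPolynomial.eval ![-c, a, e, e, -e, -e, e] q
          + MvPolynomial.eval ![c, -a, -e, -e, e, e, -e] q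
          + MvPolynomial.eval ![-c, a, e, e, -e, e, -e] q
          + MvPolynomial.eval ![c, -a, -e, -e, e, -e, e] q
          + MvPolynomial.eval ![-c, a, e, e, e, -e, -e] q
          + MvPolynomial.eval ![c, -a, -e, -e, -e, e, e] q
          + MvPolynomial.eval ![-c, a, -e, -e, -e, -e, e] q
          + MvPolynomial.eval ![c, -a, e, e, e, e, -e] q
          + MvPolynomial.eval ![-c, a, -e, -e, -e, e, -e] q
          + MvPolynomial.eval ![c, -a, e, e, e, -e, e] q
          + MvPolynomial.eval ![-c, a, -e, -e, e, -e, -e] q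
          + MvPolynomial.eval ![c, -a, e, e, -e, e, e] q
          + MvPolynomial.eval ![-c, a, -e, e, -e, -e, -e] q
          + MvPolynomial.eval ![c, -a, e, -e, e, e, e] q
          + MvPolynomial.eval ![-c, a, e, -e, -e, -e, -e] q
          + MvPolynomial.eval ![c, -a, -e, e, e, e, e] q)
        + W2 * (MvPolynomial.eval ![j, p, 0, 0, 0, 0, 0] q
          + MvPolynomial.eval ![-j, -p, 0, 0, 0, 0, 0] q
          + MvPolynomial.eval ![j, b, g, g, g, g, g] q
          + MvPolynomial.eval ![-j, -b, -g, -g, -g, -g, -g] q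
          + MvPolynomial.eval ![j, b, -g, -g, g, g, g] q
          + MvPolynomial.eval ![-j, -b, g, g, -g, -g, -g] q
          + MvPolynomial.eval ![j, b, -g, g, -g, g, g] q
          + MvPolynomial.eval ![-j, -b, g, -g, g, -g, -g] q
          + MvPolynomial.eval ![j, b, -g, g, g, -g, g] q
          + MvPolynomial.eval ![-j, -b, g, -g, -g, g, -g] q
          + MvPolynomial.eval ![j, b, -g, g, g, g, -g] q
          + MvPolynomial.eval ![-j, -b, g, -g, -g, -g, g] q
          + MvPolynomial.eval ![j, b, g, -g, -g, g, g] q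
          + MvPolynomial.eval ![-j, -b, -g, g, g, -g, -g] q
          + MvPolynomial.eval ![j, b, g, -g, g, -g, g] q
          + MvPolynomial.eval ![-j, -b, -g, g, -g, g, -g] q
          + MvPolynomial.eval ![j, b, g, -g, g, g, -g] q
          + MvPolynomial.eval ![-j, -b, -g, g, -g, -g, g] q
          + MvPolynomial.eval ![j, b, g, g, -g, -g, g] q
          + MvPolynomial.eval ![-j, -b, -g, -g, g, g, -g] q
          + MvPolynomial.eval ![j, b, g, g, -g, g, -g] q
          + MvPolynomial.eval ![-j, -b, -g, -g, g, -g, g] q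
          + MvPolynomial.eval ![j, b, g, g, g, -g, -g] q
          + MvPolynomial.eval ![-j, -b, -g, -g, -g, g, g] q
          + MvPolynomial.eval ![j, b, -g, -g, -g, -g, g] q
          + MvPolynomial.eval ![-j, -b, g, g, g, g, -g] q
          + MvPolynomial.eval ![j, b, -g, -g, -g, g, -g] q
          + MvPolynomial.eval ![-j, -b, g, g, g, -g, g] q
          + MvPolynomial.eval ![j, b, -g, -g, g, -g, -g] q
          + MvPolynomial.eval ![-j, -b, g, g, -g, g, g] q
          + MvPolynomial.eval ![j, b, -g, g, -g, -g, -g] q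
          + MvPolynomial.eval ![-j, -b, g, -g, g, g, g] q
          + MvPolynomial.eval ![j, b, g, -g, -g, -g, -g] q
          + MvPolynomial.eval ![-j, -b, -g, g, g, g, g] q
          + MvPolynomial.eval ![j, -h, o, 0, 0, 0, 0] q
          + MvPolynomial.eval ![-j, h, -o, 0, 0, 0, 0] q
          + MvPolynomial.eval ![j, -h, -o, 0, 0, 0, 0] q
          + MvPolynomial.eval ![-j, h, o, 0, 0, 0, 0] q
          + MvPolynomial.eval ![j, -h, 0, o, 0, 0, 0] q
          + MvPolynomial.eval ![-j, h, 0, -o, 0, 0, 0] q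
          + MvPolynomial.eval ![j, -h, 0, -o, 0, 0, 0] q
          + MvPolynomial.eval ![-j, h, 0, o, 0, 0, 0] q
          + MvPolynomial.eval ![j, -h, 0, 0, o, 0, 0] q
          + MvPolynomial.eval ![-j, h, 0, 0, -o, 0, 0] q
          + MvPolynomial.eval ![j, -h, 0, 0, -o, 0, 0] q
          + MvPolynomial.eval ![-j, h, 0, 0, o, 0, 0] q
          + MvPolynomial.eval ![j, -h, 0, 0, 0, o, 0] q
          + MvPolynomial.eval ![-j, h, 0, 0, 0, -o, 0] q
          + MvPolynomial.eval ![j, -h, 0, 0, 0, -o, 0] q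
          + MvPolynomial.eval ![-j, h, 0, 0, 0, o, 0] q
          + MvPolynomial.eval ![j, -h, 0, 0, 0, 0, o] q
          + MvPolynomial.eval ![-j, h, 0, 0, 0, 0, -o] q
          + MvPolynomial.eval ![j, -h, 0, 0, 0, 0, -o] q
          + MvPolynomial.eval ![-j, h, 0, 0, 0, 0, o] q
          + MvPolynomial.eval ![0, l, -g, g, g, g, g] q
          + MvPolynomial.eval ![0, -l, g, -g, -g, -g, -g] q
          + MvPolynomial.eval ![0, l, g, -g, g, g, g] q
          + MvPolynomial.eval ![0, -l, -g, g, -g, -g, -g] q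
          + MvPolynomial.eval ![0, l, g, g, -g, g, g] q
          + MvPolynomial.eval ![0, -l, -g, -g, g, -g, -g] q
          + MvPolynomial.eval ![0, l, g, g, g, -g, g] q
          + MvPolynomial.eval ![0, -l, -g, -g, -g, g, -g] q
          + MvPolynomial.eval ![0, l, g, g, g, g, -g] q
          + MvPolynomial.eval ![0, -l, -g, -g, -g, -g, g] q
          + MvPolynomial.eval ![0, l, -g, -g, -g, g, g] q
          + MvPolynomial.eval ![0, -l, g, g, g, -g, -g] q
          + MvPolynomial.eval ![0, l, -g, -g, g, -g, g] q
          + MvPolynomial.eval ![0, -l, g, g, -g, g, -g] q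
          + MvPolynomial.eval ![0, l, -g, -g, g, g, -g] q
          + MvPolynomial.eval ![0, -l, g, g, -g, -g, g] q
          + MvPolynomial.eval ![0, l, -g, g, -g, -g, g] q
          + MvPolynomial.eval ![0, -l, g, -g, g, g, -g] q
          + MvPolynomial.eval ![0, l, -g, g, -g, g, -g] q
          + MvPolynomial.eval ![0, -l, g, -g, g, -g, g] q
          + MvPolynomial.eval ![0, l, -g, g, g, -g, -g] q
          + MvPolynomial.eval ![0, -l, g, -g, -g, g, g] q
          + MvPolynomial.eval ![0, l, g, -g, -g, -g, g] q
          + MvPolynomial.eval ![0, -l, -g, g, g, g, -g] q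
          + MvPolynomial.eval ![0, l, g, -g, -g, g, -g] q
          + MvPolynomial.eval ![0, -l, -g, g, g, -g, g] q
          + MvPolynomial.eval ![0, l, g, -g, g, -g, -g] q
          + MvPolynomial.eval ![0, -l, -g, g, -g, g, g] q
          + MvPolynomial.eval ![0, l, g, g, -g, -g, -g] q
          + MvPolynomial.eval ![0, -l, -g, -g, g, g, g] q
          + MvPolynomial.eval ![0, l, -g, -g, -g, -g, -g] q
          + MvPolynomial.eval ![0, -l, g, g, g, g, g] q
          + MvPolynomial.eval ![0, 0, o, o, 0, 0, 0] q
          + MvPolynomial.eval ![0, 0, o, -o, 0, 0, 0] q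
          + MvPolynomial.eval ![0, 0, -o, o, 0, 0, 0] q
          + MvPolynomial.eval ![0, 0, -o, -o, 0, 0, 0] q
          + MvPolynomial.eval ![0, 0, o, 0, o, 0, 0] q
          + MvPolynomial.eval ![0, 0, o, 0, -o, 0, 0] q
          + MvPolynomial.eval ![0, 0, -o, 0, o, 0, 0] q
          + MvPolynomial.eval ![0, 0, -o, 0, -o, 0, 0] q
          + MvPolynomial.eval ![0, 0, o, 0, 0, o, 0] q
          + MvPolynomial.eval ![0, 0, o, 0, 0, -o, 0] q
          + MvPolynomial.eval ![0, 0, -o, 0, 0, o, 0] q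
          + MvPolynomial.eval ![0, 0, -o, 0, 0, -o, 0] q
          + MvPolynomial.eval ![0, 0, o, 0, 0, 0, o] q
          + MvPolynomial.eval ![0, 0, o, 0, 0, 0, -o] q
          + MvPolynomial.eval ![0, 0, -o, 0, 0, 0, o] q
          + MvPolynomial.eval ![0, 0, -o, 0, 0, 0, -o] q
          + MvPolynomial.eval ![0, 0, 0, o, o, 0, 0] q
          + MvPolynomial.eval ![0, 0, 0, o, -o, 0, 0] q
          + MvPolynomial.eval ![0, 0, 0, -o, o, 0, 0] q
          + MvPolynomial.eval ![0, 0, 0, -o, -o, 0, 0] q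
          + MvPolynomial.eval ![0, 0, 0, o, 0, o, 0] q
          + MvPolynomial.eval ![0, 0, 0, o, 0, -o, 0] q
          + MvPolynomial.eval ![0, 0, 0, -o, 0, o, 0] q
          + MvPolynomial.eval ![0, 0, 0, -o, 0, -o, 0] q
          + MvPolynomial.eval ![0, 0, 0, o, 0, 0, o] q
          + MvPolynomial.eval ![0, 0, 0, o, 0, 0, -o] q
          + MvPolynomial.eval ![0, 0, 0, -o, 0, 0, o] q
          + MvPolynomial.eval ![0, 0, 0, -o, 0, 0, -o] q
          + MvPolynomial.eval ![0, 0, 0, 0, o, o, 0] q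
          + MvPolynomial.eval ![0, 0, 0, 0, o, -o, 0] q
          + MvPolynomial.eval ![0, 0, 0, 0, -o, o, 0] q
          + MvPolynomial.eval ![0, 0, 0, 0, -o, -o, 0] q
          + MvPolynomial.eval ![0, 0, 0, 0, o, 0, o] q
          + MvPolynomial.eval ![0, 0, 0, 0, o, 0, -o] q
          + MvPolynomial.eval ![0, 0, 0, 0, -o, 0, o] q
          + MvPolynomial.eval ![0, 0, 0, 0, -o, 0, -o] q
          + MvPolynomial.eval ![0, 0, 0, 0, 0, o, o] q
          + MvPolynomial.eval ![0, 0, 0, 0, 0, o, -o] q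
          + MvPolynomial.eval ![0, 0, 0, 0, 0, -o, o] q
          + MvPolynomial.eval ![0, 0, 0, 0, 0, -o, -o] q)
        = ∫ x : Fin 7 → ℝ, Real.exp (-(∑ t, x t ^ 2)) * MvPolynomial.eval x q := by
  intro q hq
  have h3 : √(3 : ℝ) ^ 2 = 3 := Real.sq_sqrt (by norm_num)
  have hpos : 0 ≤ 9 - 4 * √(3 : ℝ) := by nlinarith [Real.sqrt_nonneg (3 : ℝ)]
  have hpi : Real.pi ^ ((7 : ℝ) / 2) = √Real.pi ^ 7 := by
    rw [Real.sqrt_eq_rpow, ← Real.rpow_natCast, ← Real.rpow_mul Real.pi_pos.le]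
    norm_num
  -- Inside each orbit every coordinate is an integer multiple of one of three lengths.
  have em : m = 3 * c := by rw [hm, hc]; exact sqrt_mul_of_sq (by norm_num) (by ring)
  have ek : k = 4 * a := by rw [hk, ha]; exact sqrt_mul_of_sq (by norm_num) (by ring)
  have ef : f = 2 * a := by rw [hf, ha]; exact sqrt_mul_of_sq (by norm_num) (by ring)
  have ei : i = 2 * e := by rw [hi, he]; exact sqrt_mul_of_sq (by norm_num) (by ring)
  have ep : p = 4 * b := by rw [hp, hb]; exact sqrt_mul_of_sq (by norm_num) (by ring)
  have eh : h = 2 * b := by rw [hh, hb]; exact sqrt_mul_of_sq (by norm_num) (by ring)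
  have el : l = 3 * b := by rw [hl, hb]; exact sqrt_mul_of_sq (by norm_num) (by ring)
  have eo : o = 2 * g := by rw [ho, hg]; exact sqrt_mul_of_sq (by norm_num) (by ring)
  -- The three lengths of either orbit are the diagonal of `D`, times `i = s` and `o = u`.
  have ec : c = i * √(1 / 6) := by rw [hc, hi, ← Real.sqrt_mul hpos]; congr 1; ring
  have ea : a = i * √(1 / 12) := by rw [ha, hi, ← Real.sqrt_mul hpos]; congr 1; ring
  have ee : e = i * (1 / 2) := by rw [ei]; ring
  have ej : j = 2 * (o * √(1 / 6)) := by
    rw [hj, ho, ← Real.sqrt_mul (by positivity)]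
    exact sqrt_mul_of_sq (by norm_num) (by ring)
  have eb : b = o * √(1 / 12) := by
    rw [hb, ho, ← Real.sqrt_mul (by positivity)]; congr 1; ring
  have eg : g = o * (1 / 2) := by rw [eo]; ring
  have main := exact_polynomial i o (√3) (√(1 / 6)) (√(1 / 12)) (1 / 2) h3
    (by rw [hi, Real.sq_sqrt hpos]) (by rw [ho, Real.sq_sqrt (by positivity)])
    (by rw [Real.sq_sqrt (by norm_num)]; norm_num)
    (by rw [Real.sq_sqrt (by norm_num)]; norm_num) (by norm_num) q hq
  rw [← ec, ← ea, ← ee, ← eb, ← eg, ← hpi, ← hW0, ← hW1, ← hW2] at main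
  rw [← main, ej]
  generalize o * √(1 / 6) = j'
  rw [em, ek, ef, ei, ep, eh, el, eo]
  have hzero : (![0, 0, 0, 0, 0, 0, 0] : Fin 7 → ℝ) = 0 := by
    ext t; fin_cases t <;> rfl
  rw [hzero]
  simp only [minuscule, roots, axes, spin, pairs, List.flatMap_cons, List.flatMap_nil,
    List.map_cons, List.map_nil, List.cons_append, List.nil_append, List.append_nil,
    List.sum_cons, List.sum_nil, node, Int.cast_neg, Int.cast_one, Int.cast_zero, Int.cast_ofNat,
    mul_one, mul_neg, neg_mul, neg_neg, one_mul, zero_mul]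
  set_option maxRecDepth 10000 in
  ring1
end
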